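/- (Theorem 2, ℓ∞ contraction for sparse regression.) Assume the mutual coherence condition: n^{−1}X_{*j}ᵀX_{*j} = 1 for all j ∈ [p] and max_{j≠l} |n^{−1}X_{*j}ᵀX_{*l}| ≤ τ̄. Suppose Y = Xβ* + W where β* has sparsity s* satisfying τ̄ s* ≤ 1/9 and W is sub-Gaussian with parameter ρ, and let Π be the sparse regression posterior of Corollary 4. Then for any constants λ, ρ > 0 there exists a constant D_{λ,ρ} > 0 depending only on λ, ρ such that for every D > D_{λ,ρ} there exist constants M, C' > 0 depending only on λ, ρ, D with: E Π( ‖β − β*‖_∞ > M √((log p)/n) | Y ) ≤ p^{−C'}. -/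

import Mathlib

open MeasureTheory Real Matrix
open scoped ENNReal Classical

/-- Euclidean norm of a finitely-indexed real vector. -/
noncomputable def enr {ι : Type*} [Fintype ι] (v : ι → ℝ) : ℝ :=
  Real.sqrt (∑ i, v i ^ 2)

/-- Euclidean inner product. -/
noncomputable def ipr {ι : Type*} [Fintype ι] (u v : ι → ℝ) : ℝ :=
  ∑ i, u i * v i

/-- Sub-Gaussian condition (2.2): `P(|⟨W,K⟩| > t) ≤ exp(-ρ t²/2)` for every unit vector `K`. -/
def subG {ι Ω : Type*} [Fintype ι] [MeasurableSpace Ω] (P : Measure Ω) (ρ : ℝ)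
    (W : Ω → ι → ℝ) : Prop :=
  ∀ K : ι → ℝ, enr K = 1 → ∀ t : ℝ, 0 < t →
    P {ω | t < |ipr (W ω) K|} ≤ ENNReal.ofReal (Real.exp (-ρ * t ^ 2 / 2))

/-- Determinant of the Gram matrix `AᵀA`. -/
noncomputable def gramDet {N κ : Type*} [Fintype N] [Fintype κ] [DecidableEq κ]
    (A : Matrix N κ ℝ) : ℝ := (Aᵀ * A).det

/-- Generic posterior probability for a structured linear model.
`ι` indexes the models (structures), `κ i` the coordinates of the parameter of model `i`,
`A i` is the matrix of the linear operator `𝒳` of model `i`, `w i` the model-selection prior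
weight (with the Gamma-correction already cancelled against the Laplace normalizing constant),
`emb i` maps a parameter to the object the posterior statement is about, `Y` is the data,
`Sel` restricts the model index and `U` the embedded parameter. -/
noncomputable def gpostP {Θ N ι : Type*} [Fintype N] [Fintype ι]
    {κ : ι → Type*} [∀ i, Fintype (κ i)] [∀ i, DecidableEq (κ i)]
    (w : ι → ℝ) (A : (i : ι) → Matrix N (κ i) ℝ)
    (emb : (i : ι) → (κ i → ℝ) → Θ) (lam : ℝ) (Y : N → ℝ)
    (Sel : Set ι) (U : Set Θ) : ℝ :=
  (∑ i : ι, (if i ∈ Sel then w i else 0) * Real.sqrt (gramDet (A i)) *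
      (lam / Real.sqrt π) ^ Fintype.card (κ i) *
      ∫ Q in {Q : κ i → ℝ | emb i Q ∈ U},
        Real.exp (-(1/2) * (enr fun t => Y t - (A i).mulVec Q t) ^ 2
          - lam * enr ((A i).mulVec Q))) /
  (∑ i : ι, w i * Real.sqrt (gramDet (A i)) *
      (lam / Real.sqrt π) ^ Fintype.card (κ i) *
      ∫ Q : κ i → ℝ,
        Real.exp (-(1/2) * (enr fun t => Y t - (A i).mulVec Q t) ^ 2
          - lam * enr ((A i).mulVec Q)))

/-- The submatrix `X_{*S}` of the columns of `X` indexed by `S`. -/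
noncomputable def colSub {n p : ℕ} (X : Matrix (Fin n) (Fin p) ℝ) (S : Finset (Fin p)) :
    Matrix (Fin n) ↥S ℝ := fun i j => X i j

/-- The coefficient vector `β` with `β_S` on `S` and `β_{S^c} = 0`. -/
noncomputable def sparseVec {p : ℕ} (S : Finset (Fin p)) (Q : ↥S → ℝ) : Fin p → ℝ :=
  fun j => if h : j ∈ S then Q ⟨j, h⟩ else 0

/-- The posterior distribution of the sparse-regression prior: `s` is sampled with weight
proportional to `(Γ(s)/Γ(s/2)) exp(-2Ds log(ep/s))` on `[p]`, `S` uniformly from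
`𝒵̄_s = {S : |S| = s, det(X_{*S}ᵀX_{*S}) > 0}`, and `β_S` from the elliptical Laplace
density `∝ exp(-λ‖X_{*S}β_S‖)` with `β_{S^c} = 0`; the Gaussian pseudo-likelihood
`∝ exp(-½‖Y - Xβ‖²)` is used.  `SS` restricts the selected support `S` and `U` restricts
the coefficient vector `β`.  (The Gamma correction factor has been cancelled against the
Laplace normalizing constant.) -/
noncomputable def slrPost (n p : ℕ) (X : Matrix (Fin n) (Fin p) ℝ) (D lam : ℝ)
    (Y : Fin n → ℝ) (SS : Set (Finset (Fin p))) (U : Set (Fin p → ℝ)) : ℝ :=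
  gpostP
    (fun S : Finset (Fin p) =>
      (if S.Nonempty ∧ 0 < gramDet (colSub X S) then 1 else 0) *
        Real.exp (-2 * D * S.card * Real.log (Real.exp 1 * p / S.card)) *
        ((Finset.univ.filter fun S' : Finset (Fin p) =>
            S'.card = S.card ∧ 0 < gramDet (colSub X S')).card : ℝ)⁻¹)
    (fun S => colSub X S) (fun S Q => sparseVec S Q) lam Y SS U

/-!
On an event of probability at least `1 - p⁻⁵`, the noise acts on the column span of every model `S`
with operator norm `O(√ψ)`, where `ψ = |S| log(ep/|S|)`. On this event the unnormalized posterior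
masses of the models compare as follows.

* A model at least twice as large as the true one loses to the true one: the prior penalty
  `exp(-2Dψ)` outweighs what fitting the noise can gain.
* For a smaller model `S` and `j ∉ S`, mutual coherence leaves a residual of squared norm at least
  `n/2` when `X_{*j}` is regressed on `X_{*S}`. If the largest `|β*_j|` missing from `S` is a large
  multiple of `√(log p / n)`, inserting that `j` gains more likelihood than the prior charges, so
  `S` has at most `p⁻⁶` times the mass of `insert j S`.
* If `S` misses no such coordinate, shear `β_S` along the regression of `X_{*j}` on the other
  columns. The coordinate `β_j` then runs along a line orthogonal to these columns, where the
  density is a Gaussian centred within `O(√(log p / n))` of `β*_j`, up to a factor bounded in terms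
  of `λ`; a union bound over `j ∈ S` controls the sup norm.

The masses are summed using that `∑_S 1/|𝒵̄_{|S|}|` counts model sizes, hence is at most `p`, and
that `insert j` is injective on models not containing `j`.
-/

section Euclidean

variable {ι : Type*} [Fintype ι] (u v : ι → ℝ)

lemma enr_eq_norm : enr v = ‖WithLp.toLp 2 v‖ := by
  rw [EuclideanSpace.norm_eq]
  simp [enr]

lemma enr_nonneg : 0 ≤ enr v := Real.sqrt_nonneg _

lemma enr_sq : enr v ^ 2 = v ⬝ᵥ v := by
  rw [enr, Real.sq_sqrt (Finset.sum_nonneg fun i _ => sq_nonneg _)]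
  simp [dotProduct, sq]

lemma enr_smul (c : ℝ) : enr (c • v) = |c| * enr v := by
  simp only [enr_eq_norm, WithLp.toLp_smul, norm_smul, Real.norm_eq_abs]

lemma abs_enr_add_sub_enr_le : |enr (u + v) - enr u| ≤ enr v := by
  simpa only [enr_eq_norm, WithLp.toLp_add, add_sub_cancel_left] using
    abs_norm_sub_norm_le (WithLp.toLp 2 u + WithLp.toLp 2 v) (WithLp.toLp 2 u)

lemma abs_dotProduct_le_enr_mul_enr : |u ⬝ᵥ v| ≤ enr u * enr v := by
  refine abs_le_of_sq_le_sq ?_ (mul_nonneg (enr_nonneg _) (enr_nonneg _))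
  rw [mul_pow, enr_sq, enr_sq]
  simpa [dotProduct, sq] using Finset.sum_mul_sq_le_sq_mul_sq Finset.univ u v

@[fun_prop]
lemma continuous_enr : Continuous (enr : (ι → ℝ) → ℝ) := by
  unfold enr
  fun_prop

end Euclidean

section GaussianIntegral

variable {N κ : Type*} [Fintype N] [Fintype κ]

lemma enr_mulVec_sq (A : Matrix N κ ℝ) (Q : κ → ℝ) :
    enr (A *ᵥ Q) ^ 2 = Q ⬝ᵥ ((Aᵀ * A) *ᵥ Q) := by
  rw [enr_sq, ← mulVec_mulVec, dotProduct_mulVec Q, vecMul_transpose]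

lemma exists_square_gram_eq (A : Matrix N κ ℝ) : ∃ B : Matrix κ κ ℝ, Aᵀ * A = Bᵀ * B := by
  open scoped MatrixOrder in
  obtain ⟨B, hB⟩ := CStarAlgebra.nonneg_iff_eq_star_mul_self.mp
    (posSemidef_conjTranspose_mul_self A).nonneg
  exact ⟨B, by simpa [star_eq_conjTranspose] using hB⟩

lemma integral_exp_neg_mul_enr_sq (c : ℝ) :
    ∫ Q : κ → ℝ, exp (-c * enr Q ^ 2) = √(π / c) ^ Fintype.card κ := by
  rw [← integral_gaussian, ← integral_fintype_prod_volume_eq_pow]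
  congr 1 with Q
  rw [enr_sq, ← exp_sum, dotProduct, Finset.mul_sum]
  simp only [sq]

variable [DecidableEq κ]

lemma gramDet_pos_of_mulVec_eq_zero {A : Matrix N κ ℝ} (h : ∀ Q, A *ᵥ Q = 0 → Q = 0) :
    0 < gramDet A := by
  refine (PosDef.conjTranspose_mul_self A fun u v huv => sub_eq_zero.1 (h _ ?_)).det_pos
  rw [mulVec_sub, sub_eq_zero.2 huv]

lemma abs_det_mul_integral_comp_mulVec {B : Matrix κ κ ℝ} (hB : B.det ≠ 0)
    {f : (κ → ℝ) → ℝ} (hf : Continuous f) : |B.det| * ∫ Q, f (B *ᵥ Q) = ∫ Q, f Q := by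
  have hmap := integral_map (μ := volume)
    (LinearMap.continuous_of_finiteDimensional (toLin' B)).aemeasurable hf.aestronglyMeasurable
  simp only [toLin'_apply] at hmap
  rw [← hmap, Real.map_matrix_volume_pi_eq_smul_volume_pi hB, integral_smul_measure,
    ENNReal.toReal_ofReal (abs_nonneg _), smul_eq_mul, ← mul_assoc, ← abs_mul,
    mul_inv_cancel₀ hB, abs_one, one_mul]

lemma sqrt_gramDet_mul_integral_exp {A : Matrix N κ ℝ} (hA : 0 < gramDet A) (c : ℝ) :
    √(gramDet A) * ∫ Q : κ → ℝ, exp (-c * enr (A *ᵥ Q) ^ 2) = √(π / c) ^ Fintype.card κ := by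
  obtain ⟨B, hB⟩ := exists_square_gram_eq A
  have hdet : gramDet A = B.det ^ 2 := by rw [gramDet, hB, det_mul, det_transpose, sq]
  have hB0 : B.det ≠ 0 := fun h => hA.ne' (by rw [hdet, h, sq, zero_mul])
  simp_rw [enr_mulVec_sq, hB, ← enr_mulVec_sq]
  rw [hdet, Real.sqrt_sq_eq_abs, ← integral_exp_neg_mul_enr_sq]
  exact abs_det_mul_integral_comp_mulVec hB0 (f := fun Q => exp (-c * enr Q ^ 2)) (by fun_prop)

lemma sqrt_gramDet_mul_lintegral_exp {A : Matrix N κ ℝ} (hA : 0 < gramDet A) {c : ℝ}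
    (hc : 0 < c) :
    ENNReal.ofReal (√(gramDet A)) * ∫⁻ Q : κ → ℝ, ENNReal.ofReal (exp (-c * enr (A *ᵥ Q) ^ 2))
      = ENNReal.ofReal (√(π / c) ^ Fintype.card κ) := by
  have hint : Integrable fun Q : κ → ℝ => exp (-c * enr (A *ᵥ Q) ^ 2) := by
    by_contra hundef
    have hzero := sqrt_gramDet_mul_integral_exp hA c
    rw [integral_undef hundef, mul_zero] at hzero
    exact hzero.not_lt (by positivity)
  rw [← ofReal_integral_eq_lintegral_ofReal hint (ae_of_all _ fun _ => (exp_pos _).le),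
    ← ENNReal.ofReal_mul (sqrt_nonneg _), sqrt_gramDet_mul_integral_exp hA c]

lemma lintegral_exp_neg_mul_sub_sq {b : ℝ} (hb : 0 < b) (m : ℝ) :
    ∫⁻ t : ℝ, ENNReal.ofReal (exp (-b * (t - m) ^ 2)) = ENNReal.ofReal √(π / b) := by
  rw [lintegral_sub_right_eq_self (fun t => ENNReal.ofReal (exp (-b * t ^ 2))) m,
    ← integral_gaussian, ofReal_integral_eq_lintegral_ofReal (integrable_exp_neg_mul_sq hb)
      (ae_of_all _ fun _ => (exp_pos _).le)]

end GaussianIntegral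

section LeastSquares

variable {N κ : Type*} [Fintype N] [Fintype κ] [DecidableEq κ] {A : Matrix N κ ℝ}

/-- The least-squares coefficients of `y` on the columns of `A`, meaningful when the columns are
linearly independent (`0 < gramDet A`). -/
noncomputable def leastSquares (A : Matrix N κ ℝ) (y : N → ℝ) : κ → ℝ :=
  (Aᵀ * A)⁻¹ *ᵥ (Aᵀ *ᵥ y)

/-- The least-squares residual of `y`, the component of `y` orthogonal to the columns of `A`. -/
noncomputable def leastSquaresResidual (A : Matrix N κ ℝ) (y : N → ℝ) : N → ℝ :=
  y - A *ᵥ leastSquares A y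

lemma mulVec_dotProduct_leastSquaresResidual (hA : 0 < gramDet A) (q : κ → ℝ)
    (y : N → ℝ) :
    (A *ᵥ q) ⬝ᵥ leastSquaresResidual A y = 0 := by
  have normal_eq : Aᵀ *ᵥ (A *ᵥ leastSquares A y) = Aᵀ *ᵥ y := by
    rw [mulVec_mulVec, leastSquares, mulVec_mulVec, mul_nonsing_inv _ hA.ne'.isUnit, one_mulVec]
  rw [leastSquaresResidual, ← vecMul_transpose, ← dotProduct_mulVec, mulVec_sub, normal_eq,
    sub_self, dotProduct_zero]

lemma dotProduct_leastSquaresResidual_self (hA : 0 < gramDet A) (y : N → ℝ) :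
    y ⬝ᵥ leastSquaresResidual A y = leastSquaresResidual A y ⬝ᵥ leastSquaresResidual A y := by
  conv_rhs => enter [1]; rw [leastSquaresResidual]
  rw [sub_dotProduct, mulVec_dotProduct_leastSquaresResidual hA, sub_zero]

lemma leastSquaresResidual_dotProduct_self_le (hA : 0 < gramDet A) (y : N → ℝ) :
    leastSquaresResidual A y ⬝ᵥ leastSquaresResidual A y ≤ y ⬝ᵥ y := by
  have hsq := sq_nonneg (enr (y - leastSquaresResidual A y))
  rw [enr_sq, sub_dotProduct, dotProduct_sub, dotProduct_sub,
    dotProduct_comm (leastSquaresResidual A y) y, dotProduct_leastSquaresResidual_self hA] at hsq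
  linarith

lemma gramDet_fromCols_replicateCol (hA : 0 < gramDet A) (x : N → ℝ) :
    gramDet (fromCols A (replicateCol Unit x)) =
      gramDet A * (leastSquaresResidual A x ⬝ᵥ leastSquaresResidual A x) := by
  have := invertibleOfIsUnitDet (Aᵀ * A) hA.ne'.isUnit
  rw [gramDet, transpose_fromCols, fromRows_mul_fromCols, det_fromBlocks₁₁, ← gramDet,
    det_unique, ← dotProduct_leastSquaresResidual_self hA, leastSquaresResidual, dotProduct_sub,
    leastSquares, transpose_replicateCol, invOf_eq_nonsing_inv, Matrix.mul_assoc,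
    Matrix.mul_assoc, ← replicateCol_mulVec, ← replicateCol_mulVec, ← replicateCol_mulVec]
  rfl

end LeastSquares

section InsertColumn

lemma lintegral_pi_insert {ι : Type*} [DecidableEq ι] {R : Finset ι} {j : ι} (hj : j ∉ R)
    {F : (↥(insert j R) → ℝ) → ℝ≥0∞} (hF : Measurable F) :
    ∫⁻ Q, F Q =
      ∫⁻ q : ↥R → ℝ, ∫⁻ t : ℝ, F fun k => (Finset.subtypeInsertEquivOption hj k).elim t q := by
  have split : MeasurePreserving
      (MeasurableEquiv.piOptionEquivProd (fun _ : Option ↥R => ℝ)).symm :=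
    ⟨MeasurableEquiv.measurable _, Measure.pi_map_piOptionEquivProd fun _ => volume⟩
  have reindex := volume_preserving_arrowCongr' (Finset.subtypeInsertEquivOption hj).symm
    (MeasurableEquiv.refl ℝ) (MeasurePreserving.id volume)
  have hpres := reindex.comp split
  rw [← hpres.lintegral_comp hF]
  refine (lintegral_prod _ (hF.comp hpres.measurable).aemeasurable).trans ?_
  refine lintegral_congr fun q => lintegral_congr fun t => congrArg F (funext fun k => ?_)
  change (MeasurableEquiv.piOptionEquivProd (fun _ : Option ↥R => ℝ)).symm (q, t)
    (Finset.subtypeInsertEquivOption hj k) = _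
  cases Finset.subtypeInsertEquivOption hj k <;> rfl

variable {n p : ℕ} (X : Matrix (Fin n) (Fin p) ℝ) {R : Finset (Fin p)} {j : Fin p}

/-- The residual of the column `X_{*j}` after regression on the columns in `R`. -/
noncomputable def columnResidual (R : Finset (Fin p)) (j : Fin p) : Fin n → ℝ :=
  leastSquaresResidual (colSub X R) (X.col j)

lemma colSub_insert (hj : j ∉ R) :
    colSub X (insert j R) = (fromCols (colSub X R) (replicateCol Unit (X.col j))).submatrix id
      ((Finset.subtypeInsertEquivOption hj).trans (Equiv.optionEquivSumPUnit _)) := by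
  ext i k
  by_cases hk : k.1 = j <;> simp [colSub, Finset.subtypeInsertEquivOption, hk]

lemma colSub_insert_mulVec (hj : j ∉ R) (q : ↥R → ℝ) (t : ℝ) :
    colSub X (insert j R) *ᵥ (fun k => (Finset.subtypeInsertEquivOption hj k).elim t q) =
      colSub X R *ᵥ q + t • X.col j := by
  ext i
  simp only [mulVec, dotProduct]
  rw [← (Finset.subtypeInsertEquivOption hj).symm.sum_comp, Fintype.sum_option]
  simp only [Equiv.apply_symm_apply]
  simp [colSub, Finset.subtypeInsertEquivOption, mulVec, dotProduct, add_comm, mul_comm]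

lemma gramDet_colSub_insert (hj : j ∉ R) (hR : 0 < gramDet (colSub X R)) :
    gramDet (colSub X (insert j R)) =
      gramDet (colSub X R) * (columnResidual X R j ⬝ᵥ columnResidual X R j) := by
  rw [columnResidual, ← gramDet_fromCols_replicateCol hR, gramDet, gramDet, colSub_insert X hj,
    transpose_submatrix, ← Equiv.coe_refl, submatrix_mul_equiv, det_submatrix_equiv_self]

/-- Shearing `β_R` along the regression of `X_{*j}` on `X_{*R}` replaces the column `X_{*j}` by its
residual. -/
lemma lintegral_colSub_insert (hj : j ∉ R) {F : ℝ × (Fin n → ℝ) → ℝ≥0∞} (hF : Measurable F) :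
    ∫⁻ Q : ↥(insert j R) → ℝ, F (Q ⟨j, R.mem_insert_self j⟩, colSub X (insert j R) *ᵥ Q) =
      ∫⁻ q : ↥R → ℝ, ∫⁻ t : ℝ, F (t, colSub X R *ᵥ q + t • columnResidual X R j) := by
  have hF_line (x : Fin n → ℝ) :
      Measurable fun z : (↥R → ℝ) × ℝ => F (z.2, colSub X R *ᵥ z.1 + z.2 • x) :=
    hF.comp (Continuous.measurable (by fun_prop))
  rw [lintegral_pi_insert (F := fun Q => F (Q ⟨j, _⟩, colSub X (insert j R) *ᵥ Q)) hj
    (hF.comp (Continuous.measurable (by fun_prop)))]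
  simp only [colSub_insert_mulVec]
  have hj_elim : (Finset.subtypeInsertEquivOption hj) ⟨j, R.mem_insert_self j⟩ = none := by
    simp [Finset.subtypeInsertEquivOption]
  simp only [hj_elim, Option.elim_none]
  refine (lintegral_lintegral_swap (hF_line _).aemeasurable).trans <|
    .trans (lintegral_congr fun t => ?_) (lintegral_lintegral_swap (hF_line _).aemeasurable).symm
  rw [← lintegral_sub_right_eq_self _ (t • leastSquares (colSub X R) (X.col j))]
  refine lintegral_congr fun q => ?_
  rw [columnResidual, leastSquaresResidual, mulVec_sub, mulVec_smul]
  congr 2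
  module

end InsertColumn

section PosteriorDensity

variable {N : Type*} [Fintype N] {Y u v r : N → ℝ} {lam b c : ℝ}

/-- The unnormalized posterior density at the mean vector `u = Xβ`: the Gaussian pseudo-likelihood
times the Laplace prior density. -/
noncomputable def posteriorDensity (Y : N → ℝ) (lam : ℝ) (u : N → ℝ) : ℝ :=
  exp (-(1 / 2) * enr (Y - u) ^ 2 - lam * enr u)

lemma posteriorDensity_pos : 0 < posteriorDensity Y lam u := exp_pos _

@[fun_prop]
lemma continuous_posteriorDensity : Continuous (posteriorDensity Y lam) := by
  unfold posteriorDensity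
  fun_prop

lemma posteriorDensity_add (Y u v : N → ℝ) (lam : ℝ) :
    posteriorDensity Y lam (u + v) = posteriorDensity Y lam u *
      exp ((Y - u) ⬝ᵥ v - enr v ^ 2 / 2 - lam * (enr (u + v) - enr u)) := by
  have expand : enr (Y - (u + v)) ^ 2 = enr (Y - u) ^ 2 - 2 * (Y - u) ⬝ᵥ v + enr v ^ 2 := by
    rw [← sub_sub]
    simp only [enr_sq, sub_dotProduct, dotProduct_sub, dotProduct_comm v]
    ring
  rw [posteriorDensity, posteriorDensity, ← exp_add, expand]
  ring_nf

lemma posteriorDensity_add_le (hlam : 0 ≤ lam) (h : (Y - u) ⬝ᵥ v ≤ c * enr v) :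
    posteriorDensity Y lam (u + v) ≤
      posteriorDensity Y lam u * exp ((c + lam) ^ 2 - enr v ^ 2 / 4) := by
  rw [posteriorDensity_add]
  gcongr _ * exp ?_
  · exact posteriorDensity_pos.le
  have hnorm := mul_le_mul_of_nonneg_left (abs_le.1 (abs_enr_add_sub_enr_le u v)).1 hlam
  nlinarith [sq_nonneg (c + lam - enr v / 2)]

lemma le_posteriorDensity_add (hlam : 0 ≤ lam) (h : -(c * enr v) ≤ (Y - u) ⬝ᵥ v) :
    posteriorDensity Y lam u * exp (-(c + lam) ^ 2 / 2 - enr v ^ 2) ≤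
      posteriorDensity Y lam (u + v) := by
  rw [posteriorDensity_add]
  gcongr _ * exp ?_
  · exact posteriorDensity_pos.le
  have hnorm := mul_le_mul_of_nonneg_left (abs_le.1 (abs_enr_add_sub_enr_le u v)).2 hlam
  nlinarith [sq_nonneg (c + lam - enr v)]

/-- The `t` at which the Gaussian likelihood peaks on a line `u + t r` with `u ⊥ r`. -/
noncomputable def linePeak (Y r : N → ℝ) : ℝ := (Y ⬝ᵥ r) / (r ⬝ᵥ r)

lemma sub_linePeak_dotProduct (hur : u ⬝ᵥ r = 0) (hr : 0 < r ⬝ᵥ r) (t : ℝ) :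
    (Y - (u + linePeak Y r • r)) ⬝ᵥ (t • r) = 0 := by
  simp only [dotProduct_smul, sub_dotProduct, add_dotProduct, smul_dotProduct, hur, smul_eq_mul,
    linePeak]
  field_simp
  ring

lemma linePeak_add_smul (Y u r : N → ℝ) (t : ℝ) :
    u + linePeak Y r • r + (t - linePeak Y r) • r = u + t • r := by module

lemma enr_smul_sq (t : ℝ) (r : N → ℝ) : enr (t • r) ^ 2 = (r ⬝ᵥ r) * t ^ 2 := by
  rw [enr_smul, mul_pow, sq_abs, enr_sq, mul_comm]

lemma posteriorDensity_line_le (hlam : 0 ≤ lam) (hur : u ⬝ᵥ r = 0) (hr : 0 < r ⬝ᵥ r) (t : ℝ) :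
    posteriorDensity Y lam (u + t • r) ≤ posteriorDensity Y lam (u + linePeak Y r • r) *
      exp (lam ^ 2 - (r ⬝ᵥ r) * (t - linePeak Y r) ^ 2 / 4) := by
  have peak := sub_linePeak_dotProduct (Y := Y) hur hr (t - linePeak Y r)
  simpa only [linePeak_add_smul, enr_smul_sq, zero_add] using
    posteriorDensity_add_le hlam (peak.trans (zero_mul _).symm).le

lemma le_posteriorDensity_line (hlam : 0 ≤ lam) (hur : u ⬝ᵥ r = 0) (hr : 0 < r ⬝ᵥ r) (t : ℝ) :
    posteriorDensity Y lam (u + linePeak Y r • r) *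
        exp (-lam ^ 2 / 2 - (r ⬝ᵥ r) * (t - linePeak Y r) ^ 2) ≤
      posteriorDensity Y lam (u + t • r) := by
  have peak := sub_linePeak_dotProduct (Y := Y) hur hr (t - linePeak Y r)
  simpa only [linePeak_add_smul, enr_smul_sq, zero_add] using
    le_posteriorDensity_add (u := u + linePeak Y r • r) (v := (t - linePeak Y r) • r) (c := 0) hlam
      (by rw [peak, zero_mul, neg_zero])

lemma posteriorDensity_peak_le_lintegral_line (hlam : 0 ≤ lam) (hur : u ⬝ᵥ r = 0)
    (hr : 0 < r ⬝ᵥ r) :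
    ENNReal.ofReal
        (posteriorDensity Y lam (u + linePeak Y r • r) * exp (-lam ^ 2 / 2) * √(π / (r ⬝ᵥ r))) ≤
      ∫⁻ t : ℝ, ENNReal.ofReal (posteriorDensity Y lam (u + t • r)) := by
  rw [ENNReal.ofReal_mul (mul_pos posteriorDensity_pos (exp_pos _)).le,
    ← lintegral_exp_neg_mul_sub_sq hr (linePeak Y r),
    ← lintegral_const_mul' _ _ ENNReal.ofReal_ne_top]
  refine lintegral_mono fun t => ?_
  rw [← ENNReal.ofReal_mul (mul_pos posteriorDensity_pos (exp_pos _)).le, mul_assoc, ← exp_add]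
  refine ENNReal.ofReal_le_ofReal (le_trans (le_of_eq ?_) (le_posteriorDensity_line hlam hur hr t))
  ring_nf

lemma setLIntegral_posteriorDensity_line_le (hlam : 0 ≤ lam) (hur : u ⬝ᵥ r = 0)
    (hr : 0 < r ⬝ᵥ r) {B : Set ℝ} (hB : ∀ t ∈ B, b ≤ (r ⬝ᵥ r) * (t - linePeak Y r) ^ 2) :
    ∫⁻ t in B, ENNReal.ofReal (posteriorDensity Y lam (u + t • r)) ≤
      ENNReal.ofReal (√8 * exp (3 / 2 * lam ^ 2 - b / 8)) *
        ∫⁻ t : ℝ, ENNReal.ofReal (posteriorDensity Y lam (u + t • r)) := by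
  set peak := posteriorDensity Y lam (u + linePeak Y r • r)
  have hpeak_pos : 0 < peak := posteriorDensity_pos
  have pointwise (t) (ht : t ∈ B) : ENNReal.ofReal (posteriorDensity Y lam (u + t • r)) ≤
      ENNReal.ofReal (peak * exp (lam ^ 2 - b / 8)) *
        ENNReal.ofReal (exp (-((r ⬝ᵥ r) / 8) * (t - linePeak Y r) ^ 2)) := by
    rw [← ENNReal.ofReal_mul (by positivity), mul_assoc, ← exp_add]
    refine ENNReal.ofReal_le_ofReal ((posteriorDensity_line_le hlam hur hr t).trans ?_)
    gcongr
    linarith [hB t ht]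
  calc ∫⁻ t in B, ENNReal.ofReal (posteriorDensity Y lam (u + t • r))
      ≤ ENNReal.ofReal (peak * exp (lam ^ 2 - b / 8)) * ENNReal.ofReal √(π / ((r ⬝ᵥ r) / 8)) := by
        rw [← lintegral_exp_neg_mul_sub_sq (by positivity) (linePeak Y r),
          ← lintegral_const_mul' _ _ ENNReal.ofReal_ne_top]
        exact (setLIntegral_mono (by fun_prop) pointwise).trans (setLIntegral_le_lintegral _ _)
    _ = ENNReal.ofReal (√8 * exp (3 / 2 * lam ^ 2 - b / 8)) *
          ENNReal.ofReal (peak * exp (-lam ^ 2 / 2) * √(π / (r ⬝ᵥ r))) := by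
        rw [← ENNReal.ofReal_mul (by positivity), ← ENNReal.ofReal_mul (by positivity),
          div_div_eq_mul_div, mul_comm π, mul_div_assoc, sqrt_mul (by norm_num),
          show lam ^ 2 - b / 8 = (3 / 2 * lam ^ 2 - b / 8) + -lam ^ 2 / 2 by ring, exp_add]
        ring_nf
    _ ≤ _ := by
        gcongr
        exact posteriorDensity_peak_le_lintegral_line hlam hur hr

lemma posteriorDensity_le_lintegral_line (hlam : 0 ≤ lam) (hur : u ⬝ᵥ r = 0)
    (hr : 0 < r ⬝ᵥ r) :
    ENNReal.ofReal (posteriorDensity Y lam u) ≤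
      ENNReal.ofReal (√(r ⬝ᵥ r) / √π * exp (3 / 2 * lam ^ 2 - (Y ⬝ᵥ r) ^ 2 / (r ⬝ᵥ r) / 4)) *
        ∫⁻ t : ℝ, ENNReal.ofReal (posteriorDensity Y lam (u + t • r)) := by
  set peak := posteriorDensity Y lam (u + linePeak Y r • r)
  have hpeak_pos : 0 < peak := posteriorDensity_pos
  have hsq : (Y ⬝ᵥ r) ^ 2 / (r ⬝ᵥ r) = (r ⬝ᵥ r) * linePeak Y r ^ 2 := by
    rw [linePeak]
    field_simp
  calc ENNReal.ofReal (posteriorDensity Y lam u)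
      ≤ ENNReal.ofReal (peak * exp (lam ^ 2 - (Y ⬝ᵥ r) ^ 2 / (r ⬝ᵥ r) / 4)) := by
        refine ENNReal.ofReal_le_ofReal ?_
        simpa [hsq] using posteriorDensity_line_le (Y := Y) hlam hur hr 0
    _ = ENNReal.ofReal (√(r ⬝ᵥ r) / √π *
            exp (3 / 2 * lam ^ 2 - (Y ⬝ᵥ r) ^ 2 / (r ⬝ᵥ r) / 4)) *
          ENNReal.ofReal (peak * exp (-lam ^ 2 / 2) * √(π / (r ⬝ᵥ r))) := by
        rw [← ENNReal.ofReal_mul (by positivity), sqrt_div pi_pos.le,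
          show ∀ z, lam ^ 2 - z / 4 = (3 / 2 * lam ^ 2 - z / 4) + -lam ^ 2 / 2 by intro; ring,
          exp_add]
        have := (sqrt_pos.2 hr).ne'
        have := (sqrt_pos.2 pi_pos).ne'
        congr 1
        field_simp
    _ ≤ _ := by
        gcongr
        exact posteriorDensity_peak_le_lintegral_line hlam hur hr

end PosteriorDensity

section MutualCoherence

variable {n p : ℕ}

/-- The mutual coherence condition: the columns of `X` have squared norm `n`, and distinct columns
have inner product at most `nτ`. -/
structure MutuallyCoherent (X : Matrix (Fin n) (Fin p) ℝ) (τ : ℝ) : Prop where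
  normalized (j : Fin p) : (n : ℝ)⁻¹ * (X.col j ⬝ᵥ X.col j) = 1
  coherent (j l : Fin p) : j ≠ l → |(n : ℝ)⁻¹ * (X.col j ⬝ᵥ X.col l)| ≤ τ

variable {X : Matrix (Fin n) (Fin p) ℝ} {τ : ℝ} {R : Finset (Fin p)} {j : Fin p}

lemma colSub_mulVec_eq_sum (X : Matrix (Fin n) (Fin p) ℝ) (R : Finset (Fin p)) (a : ↥R → ℝ) :
    colSub X R *ᵥ a = ∑ l : ↥R, a l • X.col l := by
  ext i
  simp [mulVec, dotProduct, colSub, mul_comm]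

lemma dotProduct_colSub_mulVec (w : Fin n → ℝ) (a : ↥R → ℝ) :
    w ⬝ᵥ (colSub X R *ᵥ a) = ∑ l : ↥R, a l * (w ⬝ᵥ X.col l) := by
  simp only [colSub_mulVec_eq_sum, dotProduct_sum, dotProduct_smul, smul_eq_mul]

lemma abs_dotProduct_colSub_mulVec_le {w : Fin n → ℝ} {B : ℝ} (hw : ∀ l ∈ R, |w ⬝ᵥ X.col l| ≤ B)
    (a : ↥R → ℝ) : |w ⬝ᵥ (colSub X R *ᵥ a)| ≤ (∑ l, |a l|) * B := by
  rw [dotProduct_colSub_mulVec, Finset.sum_mul]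
  refine (Finset.abs_sum_le_sum_abs _ _).trans (Finset.sum_le_sum fun l _ => ?_)
  rw [abs_mul]
  exact mul_le_mul_of_nonneg_left (hw l l.2) (abs_nonneg _)

namespace MutuallyCoherent

lemma cast_pos (hX : MutuallyCoherent X τ) (j : Fin p) : (0 : ℝ) < n := by
  rcases n.eq_zero_or_pos with rfl | hn
  · simpa using hX.normalized j
  · exact_mod_cast hn

lemma col_dotProduct_self (hX : MutuallyCoherent X τ) (j : Fin p) :
    X.col j ⬝ᵥ X.col j = n := by
  have := (hX.cast_pos j).ne'
  have := hX.normalized j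
  field_simp at this
  exact this

lemma abs_col_dotProduct_le (hX : MutuallyCoherent X τ) {j l : Fin p} (hjl : j ≠ l) :
    |X.col j ⬝ᵥ X.col l| ≤ n * τ := by
  have hn := hX.cast_pos j
  have := hX.coherent j l hjl
  rwa [abs_mul, abs_inv, abs_of_pos hn, inv_mul_le_iff₀ hn] at this

lemma mul_abs_le (hX : MutuallyCoherent X τ) (a : ↥R → ℝ) (k : ↥R) :
    n * |a k| ≤ |X.col k ⬝ᵥ (colSub X R *ᵥ a)| + n * τ * (∑ l, |a l| - |a k|) := by
  have split : X.col k ⬝ᵥ (colSub X R *ᵥ a) =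
      a k * n + ∑ l ∈ Finset.univ.erase k, a l * (X.col k ⬝ᵥ X.col l) := by
    rw [dotProduct_colSub_mulVec, ← Finset.add_sum_erase _ _ (Finset.mem_univ k),
      hX.col_dotProduct_self]
  have off_diagonal : |∑ l ∈ Finset.univ.erase k, a l * (X.col k ⬝ᵥ X.col l)| ≤
      n * τ * (∑ l, |a l| - |a k|) := by
    rw [← Finset.sum_erase_eq_sub (Finset.mem_univ k), Finset.mul_sum]
    refine (Finset.abs_sum_le_sum_abs _ _).trans (Finset.sum_le_sum fun l hl => ?_)
    rw [abs_mul, mul_comm]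
    gcongr
    exact hX.abs_col_dotProduct_le fun h => Finset.ne_of_mem_erase hl (Subtype.ext h.symm)
  calc n * |a k| = |a k * n| := by rw [abs_mul, Nat.abs_cast, mul_comm]
    _ = |X.col k ⬝ᵥ (colSub X R *ᵥ a) -
          ∑ l ∈ Finset.univ.erase k, a l * (X.col k ⬝ᵥ X.col l)| := by
        rw [split, add_sub_cancel_right]
    _ ≤ _ := (abs_sub _ _).trans (by gcongr)

lemma mul_sum_abs_le (hX : MutuallyCoherent X τ) (R : Finset (Fin p)) (a : ↥R → ℝ) :
    n * (1 - (R.card - 1) * τ) * ∑ l, |a l| ≤ ∑ k : ↥R, |X.col k ⬝ᵥ (colSub X R *ᵥ a)| := by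
  have hsum := Finset.sum_le_sum fun k (_ : k ∈ Finset.univ) => hX.mul_abs_le a k
  rw [← Finset.mul_sum, Finset.sum_add_distrib, ← Finset.mul_sum, Finset.sum_sub_distrib,
    Finset.sum_const, Finset.card_univ, Fintype.card_coe, nsmul_eq_mul] at hsum
  linear_combination hsum

lemma gramDet_pos (hX : MutuallyCoherent X τ) (hR : ((R.card : ℝ) - 1) * τ < 1) :
    0 < gramDet (colSub X R) := by
  refine gramDet_pos_of_mulVec_eq_zero fun a ha => ?_
  ext k
  have hle := hX.mul_sum_abs_le R a
  simp only [ha, dotProduct_zero, abs_zero, Finset.sum_const_zero] at hle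
  have hsum : ∑ l, |a l| ≤ 0 :=
    nonpos_of_mul_nonpos_right hle (mul_pos (hX.cast_pos k) (by linarith))
  have hk := (Finset.single_le_sum (fun l _ => abs_nonneg (a l)) (Finset.mem_univ k)).trans hsum
  exact abs_nonpos_iff.1 hk

lemma gramDet_pos_of_card_mul_le (hX : MutuallyCoherent X τ) (hτ : 0 ≤ τ)
    (hR : R.card * τ ≤ 2 / 9) : 0 < gramDet (colSub X R) :=
  hX.gramDet_pos (by linarith)

lemma col_dotProduct_columnResidual_of_mem (hX : MutuallyCoherent X τ) (hτ : 0 ≤ τ)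
    (hR : R.card * τ ≤ 2 / 9) {k : Fin p} (hk : k ∈ R) :
    X.col k ⬝ᵥ columnResidual X R j = 0 := by
  have hcol : colSub X R *ᵥ Pi.single ⟨k, hk⟩ 1 = X.col k := mulVec_single_one _ _
  rw [← hcol]
  exact mulVec_dotProduct_leastSquaresResidual (hX.gramDet_pos_of_card_mul_le hτ hR) _ _

lemma sum_abs_leastSquares_le (hX : MutuallyCoherent X τ) (hτ : 0 ≤ τ) (hj : j ∉ R)
    (hR : R.card * τ ≤ 2 / 9) :
    (7 / 9 + τ) * ∑ l, |leastSquares (colSub X R) (X.col j) l| ≤ 2 / 9 := by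
  have hn := hX.cast_pos j
  have normal_eq (k : ↥R) :
      X.col k ⬝ᵥ (colSub X R *ᵥ leastSquares (colSub X R) (X.col j)) = X.col k ⬝ᵥ X.col j := by
    have horth := hX.col_dotProduct_columnResidual_of_mem (j := j) hτ hR k.2
    rw [columnResidual, leastSquaresResidual, dotProduct_sub, sub_eq_zero] at horth
    exact horth.symm
  have hle := hX.mul_sum_abs_le R (leastSquares (colSub X R) (X.col j))
  have hsum : ∑ k : ↥R, |X.col k ⬝ᵥ X.col j| ≤ R.card * (n * τ) := by
    simpa using Finset.sum_le_card_nsmul Finset.univ _ _ fun (k : ↥R) _ =>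
      hX.abs_col_dotProduct_le fun h : k.1 = j => hj (h ▸ k.2)
  simp only [normal_eq] at hle
  set T := ∑ l, |leastSquares (colSub X R) (X.col j) l|
  have hT0 : 0 ≤ T := Finset.sum_nonneg fun _ _ => abs_nonneg _
  have hcancel : (1 - (R.card - 1) * τ) * T ≤ R.card * τ := by
    refine le_of_mul_le_mul_left ?_ hn
    linarith
  nlinarith

lemma col_dotProduct_columnResidual_self (hX : MutuallyCoherent X τ) (hτ : 0 ≤ τ)
    (hR : R.card * τ ≤ 2 / 9) :
    X.col j ⬝ᵥ columnResidual X R j = columnResidual X R j ⬝ᵥ columnResidual X R j :=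
  dotProduct_leastSquaresResidual_self (hX.gramDet_pos_of_card_mul_le hτ hR) _

lemma abs_dotProduct_columnResidual_le (hX : MutuallyCoherent X τ) (hτ : 0 ≤ τ) (hj : j ∉ R)
    (hR : R.card * τ ≤ 2 / 9) {w : Fin n → ℝ} {B : ℝ} (hwj : |w ⬝ᵥ X.col j| ≤ B)
    (hwR : ∀ l ∈ R, |w ⬝ᵥ X.col l| ≤ B) : |w ⬝ᵥ columnResidual X R j| ≤ 9 / 7 * B := by
  have hB : 0 ≤ B := (abs_nonneg _).trans hwj
  have hfit := abs_dotProduct_colSub_mulVec_le hwR (leastSquares (colSub X R) (X.col j))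
  have hsum := hX.sum_abs_leastSquares_le hτ hj hR
  set T := ∑ l, |leastSquares (colSub X R) (X.col j) l|
  have : 0 ≤ T := Finset.sum_nonneg fun _ _ => abs_nonneg _
  rw [columnResidual, leastSquaresResidual, dotProduct_sub]
  refine (abs_sub _ _).trans ?_
  nlinarith

lemma half_le_columnResidual_dotProduct_self (hX : MutuallyCoherent X τ) (hτ : 0 ≤ τ) (hj : j ∉ R)
    (hR : R.card * τ ≤ 2 / 9) :
    (n / 2 : ℝ) ≤ columnResidual X R j ⬝ᵥ columnResidual X R j := by
  have hn := hX.cast_pos j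
  have hfit := abs_dotProduct_colSub_mulVec_le (w := X.col j)
    (fun l hl => hX.abs_col_dotProduct_le fun h : j = l => hj (h ▸ hl))
    (leastSquares (colSub X R) (X.col j))
  have hsum := hX.sum_abs_leastSquares_le hτ hj hR
  set T := ∑ l, |leastSquares (colSub X R) (X.col j) l|
  have hT0 : 0 ≤ T := Finset.sum_nonneg fun _ _ => abs_nonneg _
  rw [← hX.col_dotProduct_columnResidual_self hτ hR, columnResidual, leastSquaresResidual,
    dotProduct_sub, hX.col_dotProduct_self]
  have : T * (n * τ) ≤ n / 2 := by
    have : T * τ ≤ 1 / 2 := by nlinarith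
    nlinarith
  linarith [(abs_le.1 hfit).2]

lemma columnResidual_dotProduct_self_le (hX : MutuallyCoherent X τ) (hτ : 0 ≤ τ)
    (hR : R.card * τ ≤ 2 / 9) :
    columnResidual X R j ⬝ᵥ columnResidual X R j ≤ n := by
  rw [← hX.col_dotProduct_self j]
  exact leastSquaresResidual_dotProduct_self_le (hX.gramDet_pos_of_card_mul_le hτ hR) _

/-- After partialling out `R`, the regression of `Y = Xβ + W` on `X_{*j}` recovers `β_j` up to the
leakage of the coordinates outside `insert j R` and the noise. -/
lemma abs_dotProduct_columnResidual_sub_le (hX : MutuallyCoherent X τ) (hτ : 0 ≤ τ) (hj : j ∉ R)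
    (hR : R.card * τ ≤ 2 / 9) {β : Fin p → ℝ}
    (hβ : τ * (Finset.univ.filter fun j => β j ≠ 0).card ≤ 1 / 9) {W : Fin n → ℝ} {B m : ℝ}
    (hW : ∀ l, |W ⬝ᵥ X.col l| ≤ B) (hm : 0 ≤ m) (hβm : ∀ k ∉ R, k ≠ j → |β k| ≤ m) :
    |(X *ᵥ β + W) ⬝ᵥ columnResidual X R j -
        β j * (columnResidual X R j ⬝ᵥ columnResidual X R j)| ≤ n / 7 * m + 9 / 7 * B := by
  have hn := hX.cast_pos j
  set r := columnResidual X R j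
  have signal : (X *ᵥ β) ⬝ᵥ r = ∑ k, β k * (X.col k ⬝ᵥ r) := by
    rw [dotProduct_comm, dotProduct_mulVec, dotProduct_comm]
    exact Finset.sum_congr rfl fun k _ => congrArg _ (dotProduct_comm r _)
  have leakage (k) (hk : k ∈ Finset.univ.erase j) :
      |β k * (X.col k ⬝ᵥ r)| ≤ if β k ≠ 0 then m * (9 / 7 * (n * τ)) else 0 := by
    have hkj := Finset.ne_of_mem_erase hk
    split_ifs with hβk
    · by_cases hkR : k ∈ R
      · rw [hX.col_dotProduct_columnResidual_of_mem hτ hR hkR, mul_zero, abs_zero]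
        positivity
      · rw [abs_mul]
        gcongr
        · exact hβm k hkR hkj
        · exact hX.abs_dotProduct_columnResidual_le hτ hj hR (hX.abs_col_dotProduct_le hkj)
            fun l hl => hX.abs_col_dotProduct_le fun h => hkR (h ▸ hl)
    · simp [not_not.1 hβk]
  have total_leakage : ∑ k ∈ Finset.univ.erase j, |β k * (X.col k ⬝ᵥ r)| ≤ n / 7 * m := by
    refine (Finset.sum_le_sum leakage).trans ((Finset.sum_le_sum_of_subset_of_nonneg
      (Finset.erase_subset _ _) fun _ _ _ => by positivity).trans ?_)
    rw [← Finset.sum_filter, Finset.sum_const, nsmul_eq_mul]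
    nlinarith [mul_nonneg hm hn.le]
  rw [add_dotProduct, signal, ← Finset.add_sum_erase _ _ (Finset.mem_univ j),
    hX.col_dotProduct_columnResidual_self hτ hR, add_sub_right_comm, add_sub_cancel_left]
  exact (abs_add_le _ _).trans (add_le_add ((Finset.abs_sum_le_sum_abs _ _).trans total_leakage)
    (hX.abs_dotProduct_columnResidual_le hτ hj hR (hW j) fun l _ => hW l))

end MutuallyCoherent

end MutualCoherence

section ModelComplexity

variable {p s t s₀ : ℕ}

/-- The complexity `s log(ep/s)` of the family of models of size `s`, which bounds
`log (p.choose s)`. -/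
noncomputable def modelComplexity (p s : ℕ) : ℝ := s * log (exp 1 * p / s)

lemma one_le_log_exp_mul_div (hs : 1 ≤ s) (hsp : s ≤ p) : 1 ≤ log (exp 1 * p / s) := by
  have : (0 : ℝ) < s := by exact_mod_cast hs
  have : (0 : ℝ) < p := by exact_mod_cast hs.trans hsp
  rw [le_log_iff_exp_le (by positivity), le_div_iff₀ (by positivity)]
  gcongr

lemma cast_le_modelComplexity (hsp : s ≤ p) : (s : ℝ) ≤ modelComplexity p s := by
  rcases s.eq_zero_or_pos with rfl | hs
  · simp [modelComplexity]
  · exact le_mul_of_one_le_right s.cast_nonneg (one_le_log_exp_mul_div hs hsp)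

lemma mul_log_exp_mul_div_le_modelComplexity (hs : 1 ≤ s) (hst : s ≤ t) (htp : t ≤ p) :
    s * log (exp 1 * p / t) ≤ modelComplexity p s := by
  have : (0 : ℝ) < s := by exact_mod_cast hs
  have : (0 : ℝ) < t := by exact_mod_cast hs.trans hst
  have : (0 : ℝ) < p := by exact_mod_cast hs.trans (hst.trans htp)
  unfold modelComplexity
  gcongr

lemma modelComplexity_eq_add (hs : 1 ≤ s) (ht : 1 ≤ t) (hp : 1 ≤ p) :
    modelComplexity p s = s * log (exp 1 * p / t) + s * log (t / s) := by
  have : (0 : ℝ) < s := by exact_mod_cast hs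
  have : (0 : ℝ) < t := by exact_mod_cast ht
  have : (0 : ℝ) < p := by exact_mod_cast hp
  rw [modelComplexity, ← mul_add, ← log_mul (by positivity) (by positivity)]
  congr 2
  field_simp

lemma modelComplexity_le_modelComplexity (hs : 1 ≤ s) (hst : s ≤ t) (htp : t ≤ p) :
    modelComplexity p s ≤ modelComplexity p t := by
  have : (0 : ℝ) < s := by exact_mod_cast hs
  have hst' : (s : ℝ) ≤ t := by exact_mod_cast hst
  have : (0 : ℝ) < t := by linarith
  have slack : s * log ((t : ℝ) / s) ≤ t - s :=
    calc s * log ((t : ℝ) / s) ≤ s * (t / s - 1) := by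
          gcongr
          exact log_le_sub_one_of_pos (by positivity)
      _ = t - s := by field_simp
  rw [modelComplexity_eq_add hs (hs.trans hst) (hs.trans (hst.trans htp)), modelComplexity]
  nlinarith [one_le_log_exp_mul_div (hs.trans hst) htp]

lemma modelComplexity_one (hp : 1 ≤ p) : modelComplexity p 1 = 1 + log p := by
  have : (p : ℝ) ≠ 0 := by exact_mod_cast (by lia : p ≠ 0)
  simp [modelComplexity, log_mul (exp_pos 1).ne' this]

lemma one_add_log_le_modelComplexity (hs : 1 ≤ s) (hsp : s ≤ p) :
    1 + log p ≤ modelComplexity p s := by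
  rw [← modelComplexity_one (hs.trans hsp)]
  exact modelComplexity_le_modelComplexity le_rfl hs hsp

lemma modelComplexity_le_of_two_mul_le (hs₀ : 1 ≤ s₀) (h : 2 * s₀ ≤ s) (hsp : s ≤ p) :
    modelComplexity p s₀ ≤ 7 / 8 * modelComplexity p s := by
  have : (0 : ℝ) < s₀ := by exact_mod_cast hs₀
  have double := modelComplexity_eq_add (p := p) (s := s₀) (t := 2 * s₀) hs₀ (by lia) (by lia)
  rw [show ((2 * s₀ : ℕ) : ℝ) / s₀ = 2 by push_cast; field_simp] at double
  have mono := modelComplexity_le_modelComplexity (p := p) (by lia : 1 ≤ 2 * s₀) h hsp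
  have hlog := one_le_log_exp_mul_div (p := p) (by lia : 1 ≤ 2 * s₀) (by lia)
  rw [modelComplexity] at mono
  push_cast at mono hlog double
  nlinarith [log_two_lt_d9]

lemma modelComplexity_le_add (hs : 1 ≤ s) (hs₀ : 1 ≤ s₀) (hst : s ≤ t) (hs₀t : s₀ ≤ t)
    (ht : t ≤ s + s₀) (htp : t ≤ p) :
    modelComplexity p t ≤ modelComplexity p s + modelComplexity p s₀ := by
  have ht' : (t : ℝ) ≤ s + s₀ := by exact_mod_cast ht
  refine le_trans ?_ (add_le_add (mul_log_exp_mul_div_le_modelComplexity hs hst htp)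
    (mul_log_exp_mul_div_le_modelComplexity hs₀ hs₀t htp))
  rw [← add_mul]
  exact mul_le_mul_of_nonneg_right ht' <|
    zero_le_one.trans (one_le_log_exp_mul_div (hs.trans hst) htp)

lemma modelComplexity_add_one_le (hs : 1 ≤ s) (hsp : s + 1 ≤ p) :
    modelComplexity p (s + 1) ≤ modelComplexity p s + (1 + log p) := by
  rw [← modelComplexity_one (by lia)]
  exact modelComplexity_le_add hs le_rfl (by lia) (by lia) le_rfl hsp

lemma choose_le_exp_modelComplexity (hs : 1 ≤ s) (hp : 1 ≤ p) :
    (p.choose s : ℝ) ≤ exp (modelComplexity p s) := by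
  have hs' : (0 : ℝ) < s := by exact_mod_cast hs
  have : (0 : ℝ) < p := by exact_mod_cast hp
  calc (p.choose s : ℝ) ≤ (p / s) ^ s * (s ^ s / s.factorial) := by
        refine (Nat.choose_le_pow_div s p).trans_eq ?_
        rw [div_pow]
        field_simp
    _ ≤ (p / s) ^ s * exp s := by
        gcongr
        exact pow_div_factorial_le_exp _ hs'.le _
    _ = exp (modelComplexity p s) := by
        rw [modelComplexity, exp_nat_mul, exp_log (by positivity), mul_div_assoc, mul_pow,
          ← exp_one_pow, mul_comm]

end ModelComplexity

section Counting

open scoped Finset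

lemma sum_inv_card_fiber {α β : Type*} [DecidableEq β] (s : Finset α) (f : α → β) :
    ∑ a ∈ s, (#{b ∈ s | f b = f a} : ℝ)⁻¹ = #(s.image f) := by
  rw [Finset.sum_comp (fun y => (#{b ∈ s | f b = y} : ℝ)⁻¹) f, Finset.card_eq_sum_ones,
    Nat.cast_sum]
  refine Finset.sum_congr rfl fun y hy => ?_
  obtain ⟨a, ha, rfl⟩ := Finset.mem_image.1 hy
  have hne : #{b ∈ s | f b = f a} ≠ 0 :=
    Finset.card_ne_zero_of_mem (Finset.mem_filter.2 ⟨ha, rfl⟩)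
  rw [nsmul_eq_mul, mul_inv_cancel₀ (by exact_mod_cast hne), Nat.cast_one]

lemma sum_inv_card_same_size_le {p : ℕ} {𝒮 : Finset (Finset (Fin p))}
    (h𝒮 : ∀ S ∈ 𝒮, S.Nonempty) :
    ∑ S ∈ 𝒮, (#{S' ∈ 𝒮 | #S' = #S} : ℝ)⁻¹ ≤ p := by
  have sizes : 𝒮.image Finset.card ⊆ Finset.Icc 1 p := by
    intro s hs
    obtain ⟨S, hS, rfl⟩ := Finset.mem_image.1 hs
    exact Finset.mem_Icc.2 ⟨(h𝒮 S hS).card_pos, card_finset_fin_le S⟩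
  rw [sum_inv_card_fiber]
  exact_mod_cast (Finset.card_le_card sizes).trans_eq (by simp)

end Counting

section Noise

lemma exists_finset_net_closedBall_two (E : Type*) [NormedAddCommGroup E] [NormedSpace ℝ E]
    [FiniteDimensional ℝ E] :
    ∃ N : Finset E, N.card ≤ 5 ^ Module.finrank ℝ E ∧ (∀ x ∈ N, ‖x‖ ≤ 2) ∧
      ∀ e : E, ‖e‖ ≤ 2 → ∃ x ∈ N, ‖e - x‖ < 1 := by
  obtain ⟨N, hcard, hN, hsep⟩ : Besicovitch.multiplicity E ∈ _ :=
    Nat.sSup_mem ⟨0, ∅, by simp⟩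
      ⟨_, fun _ ⟨s, hs, hle, hsep⟩ => hs ▸ Besicovitch.card_le_of_separated s hle hsep⟩
  refine ⟨N, hcard.trans_le Besicovitch.multiplicity_le, hN, ?_⟩
  by_contra! h
  obtain ⟨e, he, hfar⟩ := h
  have heN : e ∉ N := fun h => by simpa using (hfar e h).trans_lt' one_pos
  have hmax := Besicovitch.card_le_multiplicity (s := insert e N)
    (Finset.forall_mem_insert _ _ _ |>.2 ⟨he, hN⟩) ?_
  · rw [Finset.card_insert_of_notMem heN] at hmax
    lia
  · intro c hc d hd hcd
    rcases Finset.mem_insert.1 hc with rfl | hcN <;> rcases Finset.mem_insert.1 hd with rfl | hdN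
    · exact absurd rfl hcd
    · exact hfar d hdN
    · exact norm_sub_rev c d ▸ hfar c hcN
    · exact hsep c hcN d hdN hcd

lemma exists_finset_unit_norm_le_two_mul_inner (E : Type*) [NormedAddCommGroup E]
    [InnerProductSpace ℝ E] [FiniteDimensional ℝ E] :
    ∃ N : Finset E, N.card ≤ 5 ^ Module.finrank ℝ E ∧ (∀ x ∈ N, ‖x‖ = 1) ∧
      ∀ v : E, v ≠ 0 → ∃ x ∈ N, ‖v‖ ≤ 2 * inner ℝ x v := by
  obtain ⟨N, hcard, hN, hnet⟩ := exists_finset_net_closedBall_two E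
  refine ⟨(N.filter (· ≠ 0)).image fun x => ‖x‖⁻¹ • x,
    (Finset.card_image_le.trans (Finset.card_filter_le _ _)).trans hcard, ?_, fun v hv => ?_⟩
  · simp only [Finset.forall_mem_image, Finset.mem_filter, and_imp]
    exact fun x _ hx => norm_smul_inv_norm hx
  · have hv' : 0 < ‖v‖ := norm_pos_iff.2 hv
    obtain ⟨x, hxN, hx⟩ := hnet ((2 : ℝ) • ‖v‖⁻¹ • v) (by simp [norm_smul, hv'.ne'])
    have hinner : ‖v‖ ≤ inner ℝ x v := by
      have hclose := (real_inner_le_norm ((2 : ℝ) • ‖v‖⁻¹ • v - x) v).trans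
        (mul_le_of_le_one_left hv'.le hx.le)
      rw [inner_sub_left, real_inner_smul_left, real_inner_smul_left,
        real_inner_self_eq_norm_mul_norm, inv_mul_cancel_left₀ hv'.ne'] at hclose
      linarith
    have hx0 : x ≠ 0 := by
      rintro rfl
      simp [hv] at hinner
    refine ⟨‖x‖⁻¹ • x, Finset.mem_image_of_mem _ (Finset.mem_filter.2 ⟨hxN, hx0⟩), ?_⟩
    rw [real_inner_smul_left, ← div_eq_inv_mul, ← mul_div_assoc, le_div_iff₀ (norm_pos_iff.2 hx0)]
    nlinarith [hN x hxN]

variable {N κ : Type*} [Fintype N] [Fintype κ]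

lemma exists_finset_unit_lt_abs_dotProduct (A : Matrix N κ ℝ) :
    ∃ F : Finset (N → ℝ), F.card ≤ 5 ^ Fintype.card κ ∧ (∀ x ∈ F, enr x = 1) ∧
      ∀ (w : N → ℝ) (q : κ → ℝ) (c : ℝ), 0 < c → c * enr (A *ᵥ q) < |w ⬝ᵥ (A *ᵥ q)| →
        ∃ x ∈ F, c / 2 < |w ⬝ᵥ x| := by
  let V := LinearMap.range
    ((WithLp.linearEquiv 2 ℝ (N → ℝ)).symm.toLinearMap ∘ₗ A.mulVecLin)
  have hdim : Module.finrank ℝ V ≤ Fintype.card κ := by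
    simpa using LinearMap.finrank_range_le
      ((WithLp.linearEquiv 2 ℝ (N → ℝ)).symm.toLinearMap ∘ₗ A.mulVecLin)
  obtain ⟨F, hcard, hunit, hF⟩ := exists_finset_unit_norm_le_two_mul_inner V
  refine ⟨F.image fun x : V => (x : EuclideanSpace ℝ N).ofLp,
    Finset.card_image_le.trans (hcard.trans (Nat.pow_le_pow_right (by norm_num) hdim)), ?_, ?_⟩
  · simp only [Finset.forall_mem_image]
    exact fun x hx => (enr_eq_norm _).trans (hunit x hx)
  intro w q c hc hq
  let v := V.orthogonalProjectionOnto (WithLp.toLp 2 w)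
  have inner_proj (x : V) : inner ℝ x v = w ⬝ᵥ (x : EuclideanSpace ℝ N).ofLp := by
    rw [Submodule.inner_orthogonalProjectionOnto_eq_of_mem_left]
    simp [PiLp.inner_apply, dotProduct]
  have hv : c < ‖v‖ := by
    let z : V := ⟨WithLp.toLp 2 (A *ᵥ q), LinearMap.mem_range_self _ q⟩
    have hz : c * ‖z‖ < |inner ℝ z v| := by
      rwa [inner_proj, show ‖z‖ = enr (A *ᵥ q) from (enr_eq_norm _).symm]
    refine lt_of_mul_lt_mul_right (hz.trans_le ?_) (norm_nonneg z)
    rw [mul_comm]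
    exact abs_real_inner_le_norm z v
  obtain ⟨x, hx, hvx⟩ := hF v (norm_pos_iff.1 (hc.trans hv))
  refine ⟨_, Finset.mem_image_of_mem _ hx, ?_⟩
  rw [← inner_proj]
  exact lt_of_lt_of_le (by linarith) (le_abs_self _)

variable {Ω : Type*} [MeasurableSpace Ω] {P : Measure Ω} {ρ c : ℝ} {W : Ω → N → ℝ}

lemma subG.measure_exists_mulVec_le (hW : subG P ρ W) (A : Matrix N κ ℝ) (hc : 0 < c) :
    P {ω | ∃ q, c * enr (A *ᵥ q) < |W ω ⬝ᵥ (A *ᵥ q)|} ≤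
      ENNReal.ofReal (5 ^ Fintype.card κ * exp (-ρ * (c / 2) ^ 2 / 2)) := by
  obtain ⟨F, hcard, hunit, hF⟩ := exists_finset_unit_lt_abs_dotProduct A
  have hsub : {ω | ∃ q, c * enr (A *ᵥ q) < |W ω ⬝ᵥ (A *ᵥ q)|} ⊆
      ⋃ x ∈ F, {ω | c / 2 < |ipr (W ω) x|} := by
    rintro ω ⟨q, hq⟩
    obtain ⟨x, hx, hlt⟩ := hF (W ω) q c hc hq
    exact Set.mem_iUnion₂.2 ⟨x, hx, hlt⟩
  refine (measure_mono hsub).trans ((measure_biUnion_finset_le _ _).trans ?_)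
  refine (Finset.sum_le_card_nsmul _ _ _ fun x hx => hW x (hunit x hx) _ (half_pos hc)).trans ?_
  rw [nsmul_eq_mul, ENNReal.ofReal_mul (by positivity), ENNReal.ofReal_pow (by norm_num),
    ENNReal.ofReal_ofNat]
  gcongr
  exact_mod_cast hcard

variable {n p : ℕ}

/-- The noise event of the proof: on the column span of every model `S`, `⟨w, ·⟩` has operator norm
at most `√(Kψ)` with `ψ` the complexity of models of the size of `S`. -/
def GoodNoise (X : Matrix (Fin n) (Fin p) ℝ) (K : ℝ) (w : Fin n → ℝ) : Prop :=
  ∀ S : Finset (Fin p), S.Nonempty → ∀ q : ↥S → ℝ,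
    |w ⬝ᵥ (colSub X S *ᵥ q)| ≤ √(K * modelComplexity p S.card) * enr (colSub X S *ᵥ q)

lemma subG.measure_exists_colSub_le {W : Ω → Fin n → ℝ} (hW : subG P ρ W) (hρ : 0 < ρ)
    (X : Matrix (Fin n) (Fin p) ℝ) {S : Finset (Fin p)} (hS : S.Nonempty) :
    P {ω | ∃ q : ↥S → ℝ, √(72 / ρ * modelComplexity p S.card) * enr (colSub X S *ᵥ q) <
        |W ω ⬝ᵥ (colSub X S *ᵥ q)|} ≤
      ENNReal.ofReal (exp (-7 * modelComplexity p S.card)) := by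
  set ψ := modelComplexity p S.card
  have hcard : (S.card : ℝ) ≤ ψ := cast_le_modelComplexity (card_finset_fin_le S)
  have hψ : 0 < ψ := hcard.trans_lt' (by exact_mod_cast hS.card_pos)
  have five_le : (5 : ℝ) ≤ exp 2 := by
    rw [show (2 : ℝ) = 1 + 1 by norm_num, exp_add]
    nlinarith [exp_one_gt_d9]
  refine (hW.measure_exists_mulVec_le (colSub X S) (by positivity)).trans
    (ENNReal.ofReal_le_ofReal ?_)
  rw [div_pow, sq_sqrt (by positivity), Fintype.card_coe]
  calc (5 : ℝ) ^ S.card * exp (-ρ * (72 / ρ * ψ / 2 ^ 2) / 2)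
      ≤ exp 2 ^ S.card * exp (-ρ * (72 / ρ * ψ / 2 ^ 2) / 2) := by gcongr
    _ = exp (2 * S.card - 9 * ψ) := by
        rw [← exp_nat_mul, ← exp_add]
        congr 1
        field_simp
        ring
    _ ≤ exp (-7 * ψ) := exp_le_exp.2 (by linarith)

lemma exp_neg_modelComplexity_le {S : Finset (Fin p)} (hS : S.Nonempty) :
    exp (-7 * modelComplexity p S.card) ≤ exp (-6 * log p) * (p.choose S.card : ℝ)⁻¹ := by
  have hSp := card_finset_fin_le S
  have hchoose := choose_le_exp_modelComplexity (p := p) hS.card_pos (hS.card_pos.trans_le hSp)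
  have hlog := one_add_log_le_modelComplexity hS.card_pos hSp
  have : (0 : ℝ) < p.choose S.card := by exact_mod_cast Nat.choose_pos hSp
  calc exp (-7 * modelComplexity p S.card)
      = exp (-6 * modelComplexity p S.card) * (exp (modelComplexity p S.card))⁻¹ := by
        rw [← exp_neg, ← exp_add]
        ring_nf
    _ ≤ _ := mul_le_mul (exp_le_exp.2 (by linarith)) (inv_anti₀ this hchoose)
        (inv_nonneg.2 (exp_pos _).le) (exp_pos _).le

lemma subG.measure_not_goodNoise_le {W : Ω → Fin n → ℝ} (hW : subG P ρ W) (hρ : 0 < ρ)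
    (X : Matrix (Fin n) (Fin p) ℝ) (hp : 1 ≤ p) :
    P {ω | ¬ GoodNoise X (72 / ρ) (W ω)} ≤ ENNReal.ofReal (exp (-5 * log p)) := by
  have hp' : (0 : ℝ) < p := by exact_mod_cast hp
  set models : Finset (Finset (Fin p)) := Finset.univ.filter Finset.Nonempty
  have hsub : {ω | ¬ GoodNoise X (72 / ρ) (W ω)} ⊆ ⋃ S ∈ models, {ω | ∃ q : ↥S → ℝ,
      √(72 / ρ * modelComplexity p S.card) * enr (colSub X S *ᵥ q) <
        |W ω ⬝ᵥ (colSub X S *ᵥ q)|} := by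
    intro ω hω
    simpa [GoodNoise, models] using hω
  refine (measure_mono hsub).trans ((measure_biUnion_finset_le _ _).trans ?_)
  refine (Finset.sum_le_sum fun S hS =>
    hW.measure_exists_colSub_le hρ X (Finset.mem_filter.1 hS).2).trans ?_
  rw [← ENNReal.ofReal_sum_of_nonneg fun _ _ => (exp_pos _).le]
  refine ENNReal.ofReal_le_ofReal ?_
  have same_size (S : Finset (Fin p)) (hS : S ∈ models) :
      models.filter (fun S' => S'.card = S.card) = Finset.powersetCard S.card Finset.univ := by
    ext S'
    simp only [models, Finset.mem_filter, Finset.mem_univ, true_and, Finset.mem_powersetCard,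
      Finset.subset_univ, and_iff_right_iff_imp]
    intro h
    exact Finset.card_pos.1 (h ▸ (Finset.mem_filter.1 hS).2.card_pos)
  calc ∑ S ∈ models, exp (-7 * modelComplexity p S.card)
      ≤ ∑ S ∈ models, exp (-6 * log p) *
          ((models.filter fun S' => S'.card = S.card).card : ℝ)⁻¹ := by
        refine Finset.sum_le_sum fun S hS => ?_
        rw [same_size S hS, Finset.card_powersetCard, Finset.card_univ, Fintype.card_fin]
        exact exp_neg_modelComplexity_le (Finset.mem_filter.1 hS).2
    _ ≤ exp (-6 * log p) * exp (log p) := by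
        rw [← Finset.mul_sum, exp_log hp']
        gcongr
        exact sum_inv_card_same_size_le fun S hS => (Finset.mem_filter.1 hS).2
    _ = exp (-5 * log p) := by
        rw [← exp_add]
        ring_nf

end Noise

section Support

variable {n p : ℕ} {X : Matrix (Fin n) (Fin p) ℝ} {R S : Finset (Fin p)}

lemma mulVec_eq_colSub_mulVec {β : Fin p → ℝ} (hβ : ∀ j ∉ S, β j = 0) :
    X *ᵥ β = colSub X S *ᵥ fun j => β j := by
  rw [colSub_mulVec_eq_sum, Finset.sum_coe_sort S fun j => β j • X.col j,
    Finset.sum_subset (Finset.subset_univ S) fun j _ hj => by rw [hβ j hj, zero_smul]]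
  ext i
  simp [mulVec, dotProduct, mul_comm]

lemma mulVec_sparseVec (Q : ↥S → ℝ) : X *ᵥ sparseVec S Q = colSub X S *ᵥ Q := by
  rw [mulVec_eq_colSub_mulVec (β := sparseVec S Q) fun j hj => dif_neg hj]
  congr! 2 with j
  exact dif_pos j.2

lemma gramDet_colSub_pos_of_subset (hRS : R ⊆ S) (hS : 0 < gramDet (colSub X S)) :
    0 < gramDet (colSub X R) := by
  have hpos : ((colSub X S)ᵀ * colSub X S).PosDef := by
    rw [← conjTranspose_eq_transpose_of_trivial,
      (posSemidef_conjTranspose_mul_self (colSub X S)).posDef_iff_isUnit, isUnit_iff_isUnit_det]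
    exact hS.ne'.isUnit
  exact (hpos.submatrix (Set.inclusion_injective hRS)).det_pos

lemma GoodNoise.abs_dotProduct_mulVec_le {K : ℝ} {w : Fin n → ℝ} (hw : GoodNoise X K w)
    (hS : S.Nonempty) {β : Fin p → ℝ} (hβ : ∀ j ∉ S, β j = 0) :
    |w ⬝ᵥ (X *ᵥ β)| ≤ √(K * modelComplexity p S.card) * enr (X *ᵥ β) := by
  rw [mulVec_eq_colSub_mulVec hβ]
  exact hw S hS _

end Support

section ModelMass

variable {n p : ℕ}

/-- A model in the support of the prior on supports `S`. -/
def Admissible (X : Matrix (Fin n) (Fin p) ℝ) (S : Finset (Fin p)) : Prop :=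
  S.Nonempty ∧ 0 < gramDet (colSub X S)

/-- The cardinality of the paper's `𝒵̄_s`: the number of supports of size `s` among which the prior
chooses uniformly. -/
noncomputable def admissibleCount (X : Matrix (Fin n) (Fin p) ℝ) (s : ℕ) : ℕ :=
  (Finset.univ.filter fun S : Finset (Fin p) => S.card = s ∧ 0 < gramDet (colSub X S)).card

/-- The factor of model `S` in `slrPost`: prior weight of the support, times the normalizing
constant of the elliptical Laplace density without its Gamma correction. -/
noncomputable def modelWeight (X : Matrix (Fin n) (Fin p) ℝ) (D lam : ℝ) (S : Finset (Fin p)) : ℝ :=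
  if Admissible X S then
    exp (-(2 * D * modelComplexity p S.card)) * (admissibleCount X S.card : ℝ)⁻¹ *
      √(gramDet (colSub X S)) * (lam / √π) ^ S.card
  else 0

/-- The unnormalized posterior restricted to model `S`, as a measure on the coefficients `β_S`. -/
noncomputable def modelMass (X : Matrix (Fin n) (Fin p) ℝ) (D lam : ℝ) (Y : Fin n → ℝ)
    (S : Finset (Fin p)) : Measure (↥S → ℝ) :=
  ENNReal.ofReal (modelWeight X D lam S) •
    volume.withDensity fun Q => ENNReal.ofReal (posteriorDensity Y lam (colSub X S *ᵥ Q))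

variable {X : Matrix (Fin n) (Fin p) ℝ} {R S : Finset (Fin p)} {D lam : ℝ} {Y : Fin n → ℝ} {s : ℕ}

lemma Admissible.admissibleCount_pos (hS : Admissible X S) : 0 < admissibleCount X S.card :=
  Finset.card_pos.2 ⟨S, by simp [hS.2]⟩

lemma admissibleCount_le_choose (X : Matrix (Fin n) (Fin p) ℝ) (s : ℕ) :
    admissibleCount X s ≤ p.choose s := by
  calc admissibleCount X s ≤ (Finset.univ.powersetCard s : Finset (Finset (Fin p))).card :=
        Finset.card_le_card fun S hS => by simp_all
    _ = p.choose s := by simp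

lemma admissibleCount_succ_le (X : Matrix (Fin n) (Fin p) ℝ) (s : ℕ) :
    admissibleCount X (s + 1) ≤ p * admissibleCount X s := by
  set 𝒮 := Finset.univ.filter fun S : Finset (Fin p) => S.card = s ∧ 0 < gramDet (colSub X S)
  calc admissibleCount X (s + 1)
      ≤ ((Finset.univ ×ˢ 𝒮).image fun x : Fin p × Finset (Fin p) => insert x.1 x.2).card := by
        refine Finset.card_le_card fun S hS => ?_
        obtain ⟨hcard, hgram⟩ := (Finset.mem_filter.1 hS).2
        obtain ⟨j, hj⟩ := Finset.card_pos.1 (by omega : 0 < S.card)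
        refine Finset.mem_image.2 ⟨(j, S.erase j), ?_, Finset.insert_erase hj⟩
        simp [𝒮, Finset.card_erase_of_mem hj, hcard,
          gramDet_colSub_pos_of_subset (S.erase_subset j) hgram]
    _ ≤ (Finset.univ ×ˢ 𝒮).card := Finset.card_image_le
    _ = p * admissibleCount X s := by simp [𝒮, admissibleCount]

lemma modelWeight_nonneg (X : Matrix (Fin n) (Fin p) ℝ) (D : ℝ) (hlam : 0 ≤ lam)
    (S : Finset (Fin p)) : 0 ≤ modelWeight X D lam S := by
  unfold modelWeight
  split_ifs <;> positivity

lemma modelMass_apply (X : Matrix (Fin n) (Fin p) ℝ) (D lam : ℝ) (Y : Fin n → ℝ)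
    (S : Finset (Fin p)) (B : Set (↥S → ℝ)) :
    modelMass X D lam Y S B = ENNReal.ofReal (modelWeight X D lam S) *
      ∫⁻ Q in B, ENNReal.ofReal (posteriorDensity Y lam (colSub X S *ᵥ Q)) := by
  rw [modelMass, Measure.smul_apply, withDensity_apply', smul_eq_mul]

lemma modelMass_eq_zero (hS : ¬ Admissible X S) : modelMass X D lam Y S = 0 := by
  simp [modelMass, modelWeight, hS]

end ModelMass

section LaplaceComparison

variable {N κ : Type*} [Fintype N] [Fintype κ] [DecidableEq κ] {A : Matrix N κ ℝ} {Y u : N → ℝ}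
  {lam c : ℝ}

lemma sqrt_gramDet_mul_lintegral_exp_sub (hA : 0 < gramDet A) {C : ℝ} (hC : 0 ≤ C) (hc : 0 < c)
    (Q₀ : κ → ℝ) :
    ENNReal.ofReal (√(gramDet A)) *
        ∫⁻ Q : κ → ℝ, ENNReal.ofReal (C * exp (-c * enr (A *ᵥ (Q - Q₀)) ^ 2)) =
      ENNReal.ofReal (C * √(π / c) ^ Fintype.card κ) := by
  simp_rw [ENNReal.ofReal_mul hC]
  rw [lintegral_const_mul' _ _ ENNReal.ofReal_ne_top, lintegral_sub_right_eq_self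
    (fun Q => ENNReal.ofReal (exp (-c * enr (A *ᵥ Q) ^ 2))) Q₀, mul_left_comm,
    sqrt_gramDet_mul_lintegral_exp hA hc]

lemma enr_mulVec_sub_leastSquares_sq_le (hA : 0 < gramDet A) (u : N → ℝ) (Q : κ → ℝ) :
    enr (A *ᵥ (Q - leastSquares A u)) ^ 2 ≤ enr (A *ᵥ Q - u) ^ 2 := by
  have horth := mulVec_dotProduct_leastSquaresResidual hA (Q - leastSquares A u) u
  have hsplit : A *ᵥ Q - u = A *ᵥ (Q - leastSquares A u) - leastSquaresResidual A u := by
    rw [leastSquaresResidual, mulVec_sub]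
    abel
  have hres := sq_nonneg (enr (leastSquaresResidual A u))
  rw [enr_sq] at hres
  rw [hsplit, enr_sq, enr_sq]
  simp only [sub_dotProduct, dotProduct_sub, dotProduct_comm (leastSquaresResidual A u), horth]
  linarith

lemma sqrt_gramDet_mul_lintegral_posteriorDensity_le (hA : 0 < gramDet A) (hlam : 0 ≤ lam)
    (h : ∀ Q, (Y - u) ⬝ᵥ (A *ᵥ Q - u) ≤ c * enr (A *ᵥ Q - u)) :
    ENNReal.ofReal (√(gramDet A)) *
        ∫⁻ Q : κ → ℝ, ENNReal.ofReal (posteriorDensity Y lam (A *ᵥ Q)) ≤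
      ENNReal.ofReal (posteriorDensity Y lam u * exp ((c + lam) ^ 2) *
        √(π / (1 / 4)) ^ Fintype.card κ) := by
  have hC : 0 ≤ posteriorDensity Y lam u * exp ((c + lam) ^ 2) :=
    mul_nonneg posteriorDensity_pos.le (exp_pos _).le
  rw [← sqrt_gramDet_mul_lintegral_exp_sub hA hC (by norm_num) (leastSquares A u)]
  gcongr with Q
  calc posteriorDensity Y lam (A *ᵥ Q)
      = posteriorDensity Y lam (u + (A *ᵥ Q - u)) := by rw [add_sub_cancel]
    _ ≤ posteriorDensity Y lam u * exp ((c + lam) ^ 2 - enr (A *ᵥ Q - u) ^ 2 / 4) :=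
        posteriorDensity_add_le hlam (h Q)
    _ ≤ posteriorDensity Y lam u *
          exp ((c + lam) ^ 2 + -(1 / 4) * enr (A *ᵥ (Q - leastSquares A u)) ^ 2) := by
        have := enr_mulVec_sub_leastSquares_sq_le hA u Q
        have := (posteriorDensity_pos (Y := Y) (lam := lam) (u := u)).le
        gcongr
        linarith
    _ = _ := by rw [exp_add, mul_assoc]

lemma le_sqrt_gramDet_mul_lintegral_posteriorDensity (hA : 0 < gramDet A) (hlam : 0 ≤ lam)
    (Q₀ : κ → ℝ) (h : ∀ Q, -(c * enr (A *ᵥ Q)) ≤ (Y - A *ᵥ Q₀) ⬝ᵥ (A *ᵥ Q)) :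
    ENNReal.ofReal (posteriorDensity Y lam (A *ᵥ Q₀) * exp (-(c + lam) ^ 2 / 2) *
        √π ^ Fintype.card κ) ≤
      ENNReal.ofReal (√(gramDet A)) *
        ∫⁻ Q : κ → ℝ, ENNReal.ofReal (posteriorDensity Y lam (A *ᵥ Q)) := by
  have hC : 0 ≤ posteriorDensity Y lam (A *ᵥ Q₀) * exp (-(c + lam) ^ 2 / 2) :=
    mul_nonneg posteriorDensity_pos.le (exp_pos _).le
  rw [← div_one π, ← sqrt_gramDet_mul_lintegral_exp_sub hA hC one_pos Q₀]
  gcongr with Q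
  calc _ = posteriorDensity Y lam (A *ᵥ Q₀) *
          exp (-(c + lam) ^ 2 / 2 - enr (A *ᵥ (Q - Q₀)) ^ 2) := by
        rw [mul_assoc, ← exp_add, neg_one_mul, ← sub_eq_add_neg]
    _ ≤ posteriorDensity Y lam (A *ᵥ Q₀ + A *ᵥ (Q - Q₀)) :=
        le_posteriorDensity_add hlam (h (Q - Q₀))
    _ = posteriorDensity Y lam (A *ᵥ Q) := by rw [← mulVec_add, add_sub_cancel]

end LaplaceComparison

section ModelMassBounds

variable {n p : ℕ} {X : Matrix (Fin n) (Fin p) ℝ} {S : Finset (Fin p)} {D lam c : ℝ}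
  {Y u : Fin n → ℝ}

lemma modelMass_univ_eq (hS : Admissible X S) (D : ℝ) (hlam : 0 ≤ lam) (Y : Fin n → ℝ) :
    modelMass X D lam Y S Set.univ =
      ENNReal.ofReal (exp (-(2 * D * modelComplexity p S.card)) *
          (admissibleCount X S.card : ℝ)⁻¹ * (lam / √π) ^ S.card) *
        (ENNReal.ofReal (√(gramDet (colSub X S))) *
          ∫⁻ Q : ↥S → ℝ, ENNReal.ofReal (posteriorDensity Y lam (colSub X S *ᵥ Q))) := by
  rw [modelMass_apply, setLIntegral_univ, modelWeight, if_pos hS, mul_right_comm,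
    ENNReal.ofReal_mul (by positivity), mul_assoc]

lemma modelMass_univ_le (hS : Admissible X S) (D : ℝ) (hlam : 0 ≤ lam)
    (h : ∀ Q, (Y - u) ⬝ᵥ (colSub X S *ᵥ Q - u) ≤ c * enr (colSub X S *ᵥ Q - u)) :
    modelMass X D lam Y S Set.univ ≤
      ENNReal.ofReal (exp (-(2 * D * modelComplexity p S.card)) *
        (admissibleCount X S.card : ℝ)⁻¹ * (2 * lam) ^ S.card * exp ((c + lam) ^ 2) *
          posteriorDensity Y lam u) := by
  rw [modelMass_univ_eq hS D hlam]
  refine (mul_le_mul_right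
    (sqrt_gramDet_mul_lintegral_posteriorDensity_le hS.2 hlam h) _).trans_eq ?_
  rw [← ENNReal.ofReal_mul (by positivity), Fintype.card_coe]
  have hscale : (2 * lam) ^ S.card = (lam / √π) ^ S.card * √(π / (1 / 4)) ^ S.card := by
    have hsqrt : √(π / (1 / 4)) = √π * 2 := by
      rw [sqrt_div pi_nonneg, sqrt_div zero_le_one, sqrt_one, show (4 : ℝ) = 2 ^ 2 by norm_num,
        sqrt_sq zero_le_two]
      ring
    rw [← mul_pow, hsqrt]
    field_simp
  rw [hscale]
  congr 1
  ring

lemma le_modelMass_univ (hS : Admissible X S) (D : ℝ) (hlam : 0 ≤ lam) (Q₀ : ↥S → ℝ)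
    (h : ∀ Q, -(c * enr (colSub X S *ᵥ Q)) ≤ (Y - colSub X S *ᵥ Q₀) ⬝ᵥ (colSub X S *ᵥ Q)) :
    ENNReal.ofReal (exp (-(2 * D * modelComplexity p S.card)) *
        (admissibleCount X S.card : ℝ)⁻¹ * lam ^ S.card * exp (-(c + lam) ^ 2 / 2) *
          posteriorDensity Y lam (colSub X S *ᵥ Q₀)) ≤
      modelMass X D lam Y S Set.univ := by
  rw [modelMass_univ_eq hS D hlam]
  refine le_of_eq_of_le ?_
    (mul_le_mul_right (le_sqrt_gramDet_mul_lintegral_posteriorDensity hS.2 hlam Q₀ h) _)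
  rw [← ENNReal.ofReal_mul (by positivity), Fintype.card_coe]
  have hscale : lam ^ S.card = (lam / √π) ^ S.card * √π ^ S.card := by
    rw [← mul_pow]
    field_simp
  rw [hscale]
  congr 1
  ring

lemma modelMass_univ_lt_top (D : ℝ) (hlam : 0 ≤ lam) (Y : Fin n → ℝ) (S : Finset (Fin p)) :
    modelMass X D lam Y S Set.univ < ⊤ := by
  by_cases hS : Admissible X S
  · refine (modelMass_univ_le (u := 0) (c := enr Y) hS D hlam fun Q => ?_).trans_lt
      ENNReal.ofReal_lt_top
    rw [sub_zero, sub_zero]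
    exact (le_abs_self _).trans (abs_dotProduct_le_enr_mul_enr _ _)
  · simp [modelMass_eq_zero hS]

end ModelMassBounds

section LargeModels

variable {n p : ℕ} {X : Matrix (Fin n) (Fin p) ℝ} {S S₀ : Finset (Fin p)} {D K lam : ℝ}
  {w : Fin n → ℝ} {β : Fin p → ℝ}

/-- The threshold on the exponent `D` of the prior from which on models at least twice as large as
the true one are negligible; `K` is the noise level of `GoodNoise`. -/
noncomputable def priorDecayThreshold (K lam : ℝ) : ℝ :=
  4 * (3 * lam ^ 2 + 5 * K + 2 * lam + lam⁻¹ + 7)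

lemma priorDecayThreshold_pos (hK : 0 < K) (hlam : 0 < lam) : 0 < priorDecayThreshold K lam := by
  unfold priorDecayThreshold
  positivity

lemma sqrt_add_sq_le {x : ℝ} (hx : 0 ≤ x) (y : ℝ) : (√x + y) ^ 2 ≤ 2 * x + 2 * y ^ 2 := by
  nlinarith [sq_sqrt hx, sq_nonneg (√x - y)]

lemma exp_neg_inv_mul_le_pow (hlam : 0 < lam) {s : ℕ} {a : ℝ} (ha : s ≤ a) :
    exp (-(lam⁻¹ * a)) ≤ lam ^ s := by
  have hbase : exp (-lam⁻¹) ≤ lam := by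
    rw [exp_neg, inv_le_comm₀ (exp_pos _) hlam]
    linarith [add_one_le_exp lam⁻¹]
  calc exp (-(lam⁻¹ * a)) ≤ exp (s * -lam⁻¹) := by
        rw [mul_neg, mul_comm lam⁻¹]
        gcongr
    _ = exp (-lam⁻¹) ^ s := exp_nat_mul _ _
    _ ≤ lam ^ s := by gcongr

lemma pow_le_exp_mul {x : ℝ} (hx : 0 ≤ x) {s : ℕ} {a : ℝ} (ha : s ≤ a) : x ^ s ≤ exp (x * a) :=
  calc x ^ s ≤ exp x ^ s := by
        gcongr
        linarith [add_one_le_exp x]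
    _ = exp (s * x) := (exp_nat_mul _ _).symm
    _ ≤ exp (x * a) := by
        rw [mul_comm x]
        gcongr

/-- Here `a` is the complexity of a large model and `a₀` that of the true one; the two sides are the
logarithms of their unnormalized posterior masses up to a common factor. -/
lemma log_mass_large_le_log_mass_true (hK : 0 < K) (hlam : 0 < lam)
    (hD : priorDecayThreshold K lam ≤ D) {a a₀ : ℝ} (ha : 1 ≤ a) (ha₀ : a₀ ≤ 7 / 8 * a) :
    -(2 * D * a) + 2 * lam * a + (2 * (K * (a + a₀)) + 2 * lam ^ 2) ≤
      -6 * a + (-(2 * D * a₀) + -a₀ + -(lam⁻¹ * a₀) + -(2 * (K * a₀) + 2 * lam ^ 2) / 2) := by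
  have hD₀ := (priorDecayThreshold_pos hK hlam).le.trans hD
  have hmain := mul_le_mul_of_nonneg_right hD (zero_le_one.trans ha)
  have hDa₀ := mul_le_mul_of_nonneg_left ha₀ hD₀
  have hKa₀ := mul_le_mul_of_nonneg_left ha₀ hK.le
  have hinv := mul_le_mul_of_nonneg_left ha₀ (inv_pos.2 hlam).le
  have hsq := mul_le_mul_of_nonneg_left ha (sq_nonneg lam)
  have hinv_nonneg : 0 ≤ lam⁻¹ * a := by positivity
  have hKa : 0 ≤ K * a := by positivity
  unfold priorDecayThreshold at hmain
  nlinarith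

lemma modelMass_univ_le_exp_of_goodNoise (hS : Admissible X S) (hK : 0 < K) (hlam : 0 < lam)
    (hw : GoodNoise X K w) (D : ℝ) (hS₀ : S₀.Nonempty) (hβ : ∀ j ∉ S₀, β j = 0) :
    modelMass X D lam (X *ᵥ β + w) S Set.univ ≤
      ENNReal.ofReal ((admissibleCount X S.card : ℝ)⁻¹ *
        (exp (-(2 * D * modelComplexity p S.card) + 2 * lam * modelComplexity p S.card +
          (2 * (K * (modelComplexity p S.card + modelComplexity p S₀.card)) + 2 * lam ^ 2)) *
            posteriorDensity (X *ᵥ β + w) lam (X *ᵥ β))) := by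
  have hunion : (S ∪ S₀).Nonempty := hS.1.mono Finset.subset_union_left
  have hcomplexity : modelComplexity p (S ∪ S₀).card ≤
      modelComplexity p S.card + modelComplexity p S₀.card :=
    modelComplexity_le_add hS.1.card_pos hS₀.card_pos (Finset.card_le_card Finset.subset_union_left)
      (Finset.card_le_card Finset.subset_union_right) (Finset.card_union_le _ _)
      (card_finset_fin_le _)
  have hcross : ∀ Q, (X *ᵥ β + w - X *ᵥ β) ⬝ᵥ (colSub X S *ᵥ Q - X *ᵥ β) ≤
      √(K * modelComplexity p (S ∪ S₀).card) * enr (colSub X S *ᵥ Q - X *ᵥ β) := fun Q => by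
    rw [add_sub_cancel_left, ← mulVec_sparseVec, ← mulVec_sub]
    refine (le_abs_self _).trans (hw.abs_dotProduct_mulVec_le hunion fun j hj => ?_)
    rw [Finset.mem_union, not_or] at hj
    simp [sparseVec, hj.1, hβ j hj.2]
  refine (modelMass_univ_le hS D hlam.le hcross).trans (ENNReal.ofReal_le_ofReal ?_)
  have hdensity := (posteriorDensity_pos (Y := X *ᵥ β + w) (lam := lam) (u := X *ᵥ β)).le
  have hnonneg : 0 ≤ modelComplexity p (S ∪ S₀).card :=
    (Nat.cast_nonneg _).trans (cast_le_modelComplexity (card_finset_fin_le _))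
  have hnoise : (√(K * modelComplexity p (S ∪ S₀).card) + lam) ^ 2 ≤
      2 * (K * (modelComplexity p S.card + modelComplexity p S₀.card)) + 2 * lam ^ 2 :=
    (sqrt_add_sq_le (by positivity) lam).trans (by gcongr)
  have hpow := pow_le_exp_mul (mul_nonneg zero_le_two hlam.le)
    (cast_le_modelComplexity (card_finset_fin_le S))
  rw [mul_comm (exp _) (admissibleCount X S.card : ℝ)⁻¹, exp_add, exp_add]
  simp only [mul_assoc]
  simp only [mul_assoc] at hpow
  gcongr

lemma exp_le_modelMass_univ_of_goodNoise (hS₀ : Admissible X S₀) (hK : 0 < K) (hlam : 0 < lam)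
    (hw : GoodNoise X K w) (D : ℝ) (hβ : ∀ j ∉ S₀, β j = 0) :
    ENNReal.ofReal (exp (-(2 * D * modelComplexity p S₀.card) + -modelComplexity p S₀.card +
        -(lam⁻¹ * modelComplexity p S₀.card) +
          -(2 * (K * modelComplexity p S₀.card) + 2 * lam ^ 2) / 2) *
            posteriorDensity (X *ᵥ β + w) lam (X *ᵥ β)) ≤
      modelMass X D lam (X *ᵥ β + w) S₀ Set.univ := by
  have hcross : ∀ Q, -(√(K * modelComplexity p S₀.card) * enr (colSub X S₀ *ᵥ Q)) ≤
      (X *ᵥ β + w - colSub X S₀ *ᵥ fun j => β j) ⬝ᵥ (colSub X S₀ *ᵥ Q) := fun Q => by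
    rw [mulVec_eq_colSub_mulVec hβ, add_sub_cancel_left]
    exact (abs_le.1 (hw S₀ hS₀.1 Q)).1
  refine le_trans (ENNReal.ofReal_le_ofReal ?_) (le_modelMass_univ hS₀ D hlam.le _ hcross)
  rw [← mulVec_eq_colSub_mulVec hβ]
  have hdensity := (posteriorDensity_pos (Y := X *ᵥ β + w) (lam := lam) (u := X *ᵥ β)).le
  have hcomplexity := cast_le_modelComplexity (card_finset_fin_le S₀)
  have hnonneg := (Nat.cast_nonneg _).trans hcomplexity
  have hnoise := sqrt_add_sq_le (mul_nonneg hK.le hnonneg) lam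
  have hpow := exp_neg_inv_mul_le_pow hlam hcomplexity
  have hcount : exp (-modelComplexity p S₀.card) ≤ (admissibleCount X S₀.card : ℝ)⁻¹ := by
    have := hS₀.admissibleCount_pos
    rw [exp_neg]
    gcongr
    refine le_trans (mod_cast admissibleCount_le_choose X S₀.card)
      (choose_le_exp_modelComplexity hS₀.1.card_pos ?_)
    exact hS₀.1.card_pos.trans_le (card_finset_fin_le S₀)
  simp only [exp_add]
  gcongr

lemma modelMass_univ_le_of_two_mul_card_le (hS : Admissible X S) (hS₀ : Admissible X S₀)
    (hcard : 2 * S₀.card ≤ S.card) (hK : 0 < K) (hlam : 0 < lam)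
    (hD : priorDecayThreshold K lam ≤ D) (hw : GoodNoise X K w) (hβ : ∀ j ∉ S₀, β j = 0) :
    modelMass X D lam (X *ᵥ β + w) S Set.univ ≤
      ENNReal.ofReal ((admissibleCount X S.card : ℝ)⁻¹ * exp (-6 * log p)) *
        modelMass X D lam (X *ᵥ β + w) S₀ Set.univ := by
  have hlog := one_add_log_le_modelComplexity hS.1.card_pos (card_finset_fin_le S)
  have hp : 0 ≤ log p := log_natCast_nonneg p
  have hexponent := log_mass_large_le_log_mass_true hK hlam hD (by linarith)
    (modelComplexity_le_of_two_mul_le hS₀.1.card_pos hcard (card_finset_fin_le S))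
  have hdensity := (posteriorDensity_pos (Y := X *ᵥ β + w) (lam := lam) (u := X *ᵥ β)).le
  refine (modelMass_univ_le_exp_of_goodNoise hS hK hlam hw D hS₀.1 hβ).trans
    (le_trans ?_ (mul_le_mul_right (exp_le_modelMass_univ_of_goodNoise hS₀ hK hlam hw D hβ) _))
  rw [← ENNReal.ofReal_mul (by positivity), mul_assoc (admissibleCount X S.card : ℝ)⁻¹,
    ← mul_assoc (exp (-6 * log p)), ← exp_add]
  gcongr ENNReal.ofReal (_ * (exp ?_ * _))
  linarith

end LargeModels

section Insert

variable {n p : ℕ} {X : Matrix (Fin n) (Fin p) ℝ} {R : Finset (Fin p)} {j : Fin p} {D lam : ℝ}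
  {Y : Fin n → ℝ}

lemma lintegral_posteriorDensity_le_insert (hj : j ∉ R) (hR : 0 < gramDet (colSub X R))
    (hr : 0 < columnResidual X R j ⬝ᵥ columnResidual X R j) (hlam : 0 ≤ lam) (Y : Fin n → ℝ) :
    ∫⁻ q, ENNReal.ofReal (posteriorDensity Y lam (colSub X R *ᵥ q)) ≤
      ENNReal.ofReal (√(columnResidual X R j ⬝ᵥ columnResidual X R j) / √π *
        exp (3 / 2 * lam ^ 2 - (Y ⬝ᵥ columnResidual X R j) ^ 2 /
          (columnResidual X R j ⬝ᵥ columnResidual X R j) / 4)) *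
        ∫⁻ Q, ENNReal.ofReal (posteriorDensity Y lam (colSub X (insert j R) *ᵥ Q)) := by
  have hF : Measurable fun x : ℝ × (Fin n → ℝ) => ENNReal.ofReal (posteriorDensity Y lam x.2) :=
    (Continuous.measurable (by fun_prop)).ennreal_ofReal
  rw [lintegral_colSub_insert X hj hF, ← lintegral_const_mul' _ _ ENNReal.ofReal_ne_top]
  exact lintegral_mono fun q =>
    posteriorDensity_le_lintegral_line hlam (mulVec_dotProduct_leastSquaresResidual hR q _) hr

lemma Admissible.insert (hR : Admissible X R) (hj : j ∉ R)
    (hr : 0 < columnResidual X R j ⬝ᵥ columnResidual X R j) : Admissible X (insert j R) :=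
  ⟨R.insert_nonempty j, by rw [gramDet_colSub_insert X hj hR.2]; exact mul_pos hR.2 hr⟩

lemma modelWeight_mul_le_insert (hR : Admissible X R) (hj : j ∉ R)
    (hr : 0 < columnResidual X R j ⬝ᵥ columnResidual X R j) (hlam : 0 < lam) (hD : 0 ≤ D) :
    modelWeight X D lam R * (√(columnResidual X R j ⬝ᵥ columnResidual X R j) / √π) ≤
      exp (2 * D * (1 + log p)) * p * lam⁻¹ * modelWeight X D lam (insert j R) := by
  have hS := hR.insert hj hr
  have hcard := Finset.card_insert_of_notMem hj
  have hcount : (0 : ℝ) < admissibleCount X R.card := mod_cast hR.admissibleCount_pos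
  have hcount_insert : (0 : ℝ) < admissibleCount X (R.card + 1) := by
    rw [← hcard]
    exact mod_cast hS.admissibleCount_pos
  have hcount_le : (admissibleCount X R.card : ℝ)⁻¹ ≤
      p * (admissibleCount X (R.card + 1) : ℝ)⁻¹ := by
    rw [← div_eq_mul_inv, le_div_iff₀ hcount_insert, inv_mul_le_iff₀ hcount, mul_comm]
    exact mod_cast admissibleCount_succ_le X R.card
  have hpenalty : exp (-(2 * D * modelComplexity p R.card)) ≤
      exp (2 * D * (1 + log p)) * exp (-(2 * D * modelComplexity p (R.card + 1))) := by
    have hcomplexity := modelComplexity_add_one_le hR.1.card_pos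
      (hcard ▸ card_finset_fin_le (insert j R))
    rw [← exp_add]
    gcongr
    linarith [mul_le_mul_of_nonneg_left hcomplexity hD]
  rw [modelWeight, if_pos hR, modelWeight, if_pos hS, hcard, gramDet_colSub_insert X hj hR.2,
    sqrt_mul hR.2.le]
  set r := √(columnResidual X R j ⬝ᵥ columnResidual X R j)
  set g := √(gramDet (colSub X R))
  calc exp (-(2 * D * modelComplexity p R.card)) * (admissibleCount X R.card : ℝ)⁻¹ * g *
        (lam / √π) ^ R.card * (r / √π)
      ≤ exp (2 * D * (1 + log p)) * exp (-(2 * D * modelComplexity p (R.card + 1))) *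
        (p * (admissibleCount X (R.card + 1) : ℝ)⁻¹) * g * (lam / √π) ^ R.card * (r / √π) := by
        gcongr
    _ = exp (2 * D * (1 + log p)) * p * lam⁻¹ *
        (exp (-(2 * D * modelComplexity p (R.card + 1))) *
          (admissibleCount X (R.card + 1) : ℝ)⁻¹ * (g * r) * (lam / √π) ^ (R.card + 1)) := by
        rw [pow_succ]
        field_simp

lemma modelMass_univ_le_insert (hR : Admissible X R) (hj : j ∉ R)
    (hr : 0 < columnResidual X R j ⬝ᵥ columnResidual X R j) (hlam : 0 < lam) (hD : 0 ≤ D)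
    (Y : Fin n → ℝ) :
    modelMass X D lam Y R Set.univ ≤
      ENNReal.ofReal (exp (2 * D * (1 + log p)) * p * lam⁻¹ *
        exp (3 / 2 * lam ^ 2 - (Y ⬝ᵥ columnResidual X R j) ^ 2 /
          (columnResidual X R j ⬝ᵥ columnResidual X R j) / 4)) *
        modelMass X D lam Y (insert j R) Set.univ := by
  simp only [modelMass_apply, setLIntegral_univ]
  grw [lintegral_posteriorDensity_le_insert hj hR.2 hr hlam.le Y]
  rw [← mul_assoc, ← mul_assoc, ← ENNReal.ofReal_mul (modelWeight_nonneg X D hlam.le R),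
    ← ENNReal.ofReal_mul (by positivity), ← mul_assoc]
  grw [modelWeight_mul_le_insert hR hj hr hlam hD, mul_right_comm]

/-- The coordinate `β_j` is unchanged by the shear that replaces `X_{*j}` by its residual, so the
one-dimensional tail bound applies to it conditionally on `β_R`. -/
lemma modelMass_insert_le_of_linePeak (hj : j ∉ R) (hR : 0 < gramDet (colSub X R))
    (hr : 0 < columnResidual X R j ⬝ᵥ columnResidual X R j) (hlam : 0 ≤ lam) {B : Set ℝ}
    (hB : MeasurableSet B) {b : ℝ}
    (hBb : ∀ t ∈ B, b ≤ (columnResidual X R j ⬝ᵥ columnResidual X R j) *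
      (t - linePeak Y (columnResidual X R j)) ^ 2) :
    modelMass X D lam Y (insert j R) {Q | Q ⟨j, R.mem_insert_self j⟩ ∈ B} ≤
      ENNReal.ofReal (√8 * exp (3 / 2 * lam ^ 2 - b / 8)) *
        modelMass X D lam Y (insert j R) Set.univ := by
  set f : ℝ × (Fin n → ℝ) → ℝ≥0∞ := fun x => ENNReal.ofReal (posteriorDensity Y lam x.2)
  have hf : Measurable f := (Continuous.measurable (by fun_prop)).ennreal_ofReal
  have hB' : MeasurableSet {x : ℝ × (Fin n → ℝ) | x.1 ∈ B} := measurable_fst hB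
  have hQ : MeasurableSet {Q : ↥(insert j R) → ℝ | Q ⟨j, R.mem_insert_self j⟩ ∈ B} :=
    measurable_pi_apply _ hB
  rw [modelMass_apply, modelMass_apply, setLIntegral_univ, mul_left_comm]
  gcongr
  calc ∫⁻ Q in {Q | Q ⟨j, R.mem_insert_self j⟩ ∈ B},
          ENNReal.ofReal (posteriorDensity Y lam (colSub X (insert j R) *ᵥ Q))
      = ∫⁻ Q : ↥(insert j R) → ℝ, {x : ℝ × (Fin n → ℝ) | x.1 ∈ B}.indicator f
          (Q ⟨j, R.mem_insert_self j⟩, colSub X (insert j R) *ᵥ Q) := by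
        rw [← lintegral_indicator hQ]
        rfl
    _ = ∫⁻ q : ↥R → ℝ, ∫⁻ t in B,
          ENNReal.ofReal (posteriorDensity Y lam (colSub X R *ᵥ q + t • columnResidual X R j)) := by
        rw [lintegral_colSub_insert X hj (hf.indicator hB')]
        simp only [← lintegral_indicator hB]
        rfl
    _ ≤ ∫⁻ q : ↥R → ℝ, ENNReal.ofReal (√8 * exp (3 / 2 * lam ^ 2 - b / 8)) * ∫⁻ t : ℝ,
          ENNReal.ofReal (posteriorDensity Y lam (colSub X R *ᵥ q + t • columnResidual X R j)) :=
        lintegral_mono fun q => setLIntegral_posteriorDensity_line_le hlam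
          (mulVec_dotProduct_leastSquaresResidual hR q _) hr hBb
    _ = ENNReal.ofReal (√8 * exp (3 / 2 * lam ^ 2 - b / 8)) *
          ∫⁻ Q, ENNReal.ofReal (posteriorDensity Y lam (colSub X (insert j R) *ᵥ Q)) := by
        rw [lintegral_const_mul' _ _ ENNReal.ofReal_ne_top, ← lintegral_colSub_insert X hj hf]

end Insert

section Detection

variable {n p : ℕ} {X : Matrix (Fin n) (Fin p) ℝ} {τ : ℝ} {R S : Finset (Fin p)} {j : Fin p}
  {D K lam : ℝ} {w : Fin n → ℝ} {β : Fin p → ℝ}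

lemma half_le_log_of_two_le (hp : 2 ≤ p) : 1 / 2 ≤ log p := by
  have := log_le_log two_pos (mod_cast hp : (2 : ℝ) ≤ p)
  linarith [log_two_gt_d9]

lemma MutuallyCoherent.cast_mul_sq_sqrt (hX : MutuallyCoherent X τ) (j : Fin p) :
    n * √(log p / n) ^ 2 = log p := by
  rw [sq_sqrt (div_nonneg (log_natCast_nonneg p) n.cast_nonneg), mul_div_cancel₀ _
    (hX.cast_pos j).ne']

lemma GoodNoise.abs_dotProduct_col_le (hw : GoodNoise X K w) (hX : MutuallyCoherent X τ)
    (hp : 2 ≤ p) (hK : 0 ≤ K) (k : Fin p) :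
    |w ⬝ᵥ X.col k| ≤ √(3 * K) * (n * √(log p / n)) := by
  have hlog := half_le_log_of_two_le hp
  have hcol : colSub X {k} *ᵥ (fun _ => (1 : ℝ)) = X.col k := by simp [colSub_mulVec_eq_sum]
  have hnorm : enr (X.col k) = √n := by
    rw [← hX.col_dotProduct_self k, ← enr_sq, sqrt_sq (enr_nonneg _)]
  have hrate : √(log p) * √n = n * √(log p / n) := by
    rw [sqrt_div (log_natCast_nonneg p), mul_div_left_comm, div_sqrt]
  have hbound := hw {k} (Finset.singleton_nonempty k) fun _ => 1
  rw [hcol, hnorm, Finset.card_singleton, modelComplexity_one (by lia)] at hbound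
  rw [← hrate, ← mul_assoc, ← sqrt_mul (by positivity : 0 ≤ 3 * K)]
  refine hbound.trans ?_
  gcongr √?_ * _
  nlinarith

lemma MutuallyCoherent.le_abs_dotProduct_columnResidual (hX : MutuallyCoherent X τ) (hτ : 0 ≤ τ)
    (hj : j ∉ R) (hR : R.card * τ ≤ 2 / 9)
    (hβ : τ * (Finset.univ.filter fun j => β j ≠ 0).card ≤ 1 / 9)
    (hmax : ∀ k ∉ R, |β k| ≤ |β j|) {a b : ℝ} (hw : ∀ l, |w ⬝ᵥ X.col l| ≤ b) (ha : 0 ≤ a)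
    (hab : 4 * (b + a) ≤ n * |β j|) :
    a ≤ |(X *ᵥ β + w) ⬝ᵥ columnResidual X R j| := by
  have hb : 0 ≤ b := (abs_nonneg _).trans (hw j)
  have hr := mul_le_mul_of_nonneg_left (hX.half_le_columnResidual_dotProduct_self hτ hj hR)
    (abs_nonneg (β j))
  have herror := hX.abs_dotProduct_columnResidual_sub_le hτ hj hR hβ hw (abs_nonneg (β j))
    fun k hk _ => hmax k hk
  set r := columnResidual X R j
  have hsignal : |β j| * (r ⬝ᵥ r) - |(X *ᵥ β + w) ⬝ᵥ r| ≤ n / 7 * |β j| + 9 / 7 * b := by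
    have hr_nonneg : 0 ≤ r ⬝ᵥ r := Finset.sum_nonneg fun i _ => mul_self_nonneg (r i)
    rw [← abs_of_nonneg hr_nonneg, ← abs_mul]
    exact (abs_sub_abs_le_abs_sub _ _).trans ((abs_sub_comm _ _).trans_le herror)
  linarith

/-- Above this multiple of `√(log p / n)`, a coordinate of the true coefficient vector that is
missing from a model makes that model negligible. -/
noncomputable def detectionConstant (K D lam : ℝ) : ℝ :=
  4 * (√(3 * K) + 2 * √(6 * D + 7 + 2 * lam⁻¹ + 3 * lam ^ 2))

lemma insertion_factor_le (hp : 2 ≤ p) (hlam : 0 < lam) (hD : 0 ≤ D) {z : ℝ}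
    (hz : 4 * (6 * D + 7 + 2 * lam⁻¹ + 3 * lam ^ 2) * log p ≤ z) :
    exp (2 * D * (1 + log p)) * p * lam⁻¹ * exp (3 / 2 * lam ^ 2 - z / 4) ≤
      exp (-6 * log p) := by
  have hlog := half_le_log_of_two_le hp
  have hinv := mul_le_mul_of_nonneg_left hlog (inv_pos.2 hlam).le
  have hsq := mul_le_mul_of_nonneg_left hlog (sq_nonneg lam)
  have hDlog := mul_le_mul_of_nonneg_left hlog hD
  calc exp (2 * D * (1 + log p)) * p * lam⁻¹ * exp (3 / 2 * lam ^ 2 - z / 4)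
      ≤ exp (2 * D * (1 + log p)) * exp (log p) * exp lam⁻¹ * exp (3 / 2 * lam ^ 2 - z / 4) := by
        rw [exp_log (by positivity)]
        gcongr
        linarith [add_one_le_exp lam⁻¹]
    _ ≤ exp (-6 * log p) := by
        simp only [← exp_add]
        gcongr
        linarith

lemma exists_modelMass_univ_le_insert (hX : MutuallyCoherent X τ) (hτ : 0 ≤ τ) (hp : 2 ≤ p)
    (hK : 0 ≤ K) (hlam : 0 < lam) (hD : 0 ≤ D) (hw : GoodNoise X K w)
    (hβ : τ * (Finset.univ.filter fun j => β j ≠ 0).card ≤ 1 / 9) (hS : S.Nonempty)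
    (hScard : S.card * τ ≤ 2 / 9)
    (hlarge : ∃ j ∉ S, detectionConstant K D lam * √(log p / n) < |β j|) :
    ∃ j ∉ S, modelMass X D lam (X *ᵥ β + w) S Set.univ ≤
      ENNReal.ofReal (exp (-6 * log p)) *
        modelMass X D lam (X *ᵥ β + w) (insert j S) Set.univ := by
  obtain ⟨l, hl, hβl⟩ := hlarge
  obtain ⟨j, hj, hmax⟩ := Finset.exists_max_image Sᶜ (|β ·|) ⟨l, Finset.mem_compl.2 hl⟩
  simp only [Finset.mem_compl] at hj hmax
  have hn := hX.cast_pos j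
  have hr_pos : 0 < columnResidual X S j ⬝ᵥ columnResidual X S j :=
    (half_pos hn).trans_le (hX.half_le_columnResidual_dotProduct_self hτ hj hScard)
  have hr_le := hX.columnResidual_dotProduct_self_le hτ (j := j) hScard
  have hrate := hX.cast_mul_sq_sqrt j
  set q := √(log p / n)
  set c := 6 * D + 7 + 2 * lam⁻¹ + 3 * lam ^ 2 with hc
  have hβj : 4 * (√(3 * K) * (n * q) + 2 * √c * (n * q)) ≤ n * |β j| := by
    have := mul_le_mul_of_nonneg_left (hβl.le.trans (hmax l hl)) hn.le
    rw [detectionConstant, ← hc] at this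
    linarith
  have hcorr := hX.le_abs_dotProduct_columnResidual hτ hj hScard hβ hmax
    (hw.abs_dotProduct_col_le hX hp hK) (by positivity) hβj
  refine ⟨j, hj, (modelMass_univ_le_insert ⟨hS, hX.gramDet_pos_of_card_mul_le hτ hScard⟩ hj hr_pos
    hlam hD _).trans ?_⟩
  gcongr
  refine insertion_factor_le hp hlam hD ((le_div_iff₀ hr_pos).2 ?_)
  calc 4 * c * log p * (columnResidual X S j ⬝ᵥ columnResidual X S j)
      ≤ 4 * c * log p * n := by gcongr
    _ = (2 * √c * (n * q)) ^ 2 := by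
        rw [mul_pow, mul_pow, sq_sqrt (by positivity), ← hrate]
        ring
    _ ≤ ((X *ᵥ β + w) ⬝ᵥ columnResidual X S j) ^ 2 := by
        rw [← sq_abs ((X *ᵥ β + w) ⬝ᵥ _)]
        gcongr

end Detection

section Contraction

variable {n p : ℕ} {X : Matrix (Fin n) (Fin p) ℝ} {τ : ℝ} {R S : Finset (Fin p)} {j : Fin p}
  {D K lam M : ℝ} {w : Fin n → ℝ} {β : Fin p → ℝ}

/-- The constant `M` of the contraction rate `M * √(log p / n)`. -/
noncomputable def contractionConstant (K D lam : ℝ) : ℝ :=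
  detectionConstant K D lam + 3 * √(3 * K) + 4 * √(10 + 3 * lam ^ 2)

lemma detectionConstant_nonneg : 0 ≤ detectionConstant K D lam := by
  unfold detectionConstant
  positivity

lemma detectionConstant_le_contractionConstant :
    detectionConstant K D lam ≤ contractionConstant K D lam := by
  rw [contractionConstant, add_assoc]
  exact le_add_of_nonneg_right (by positivity)

lemma contractionConstant_pos : 0 < contractionConstant K D lam := by
  have := detectionConstant_nonneg (K := K) (D := D) (lam := lam)
  unfold contractionConstant
  positivity

lemma MutuallyCoherent.abs_linePeak_sub_le (hX : MutuallyCoherent X τ) (hτ : 0 ≤ τ)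
    (hj : j ∉ R) (hR : R.card * τ ≤ 2 / 9)
    (hβ : τ * (Finset.univ.filter fun j => β j ≠ 0).card ≤ 1 / 9) {m b : ℝ} (hm : 0 ≤ m)
    (hβm : ∀ k ∉ R, k ≠ j → |β k| ≤ m) (hw : ∀ l, |w ⬝ᵥ X.col l| ≤ n * b) :
    |linePeak (X *ᵥ β + w) (columnResidual X R j) - β j| ≤ m + 3 * b := by
  have hn := hX.cast_pos j
  have hb : 0 ≤ b := nonneg_of_mul_nonneg_right ((abs_nonneg _).trans (hw j)) hn
  have hr := hX.half_le_columnResidual_dotProduct_self hτ hj hR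
  have herror := hX.abs_dotProduct_columnResidual_sub_le hτ hj hR hβ hw hm hβm
  have hr_pos := (half_pos hn).trans_le hr
  set r := columnResidual X R j
  rw [linePeak, div_sub' hr_pos.ne', abs_div, abs_of_pos hr_pos, div_le_iff₀ hr_pos,
    mul_comm (r ⬝ᵥ r)]
  calc |(X *ᵥ β + w) ⬝ᵥ r - β j * (r ⬝ᵥ r)| ≤ n / 7 * m + 9 / 7 * (n * b) := herror
    _ ≤ (m + 3 * b) * (n / 2) := by nlinarith [mul_nonneg hn.le hm, mul_nonneg hn.le hb]
    _ ≤ (m + 3 * b) * (r ⬝ᵥ r) := by gcongr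

lemma tail_factor_le (hp : 2 ≤ p) (lam : ℝ) :
    √8 * exp (3 / 2 * lam ^ 2 - 8 * (10 + 3 * lam ^ 2) * log p / 8) ≤ exp (-6 * log p) := by
  have hlog := half_le_log_of_two_le hp
  have hsq := mul_le_mul_of_nonneg_left hlog (sq_nonneg lam)
  have h8 : √8 ≤ exp 2 := by
    rw [sqrt_le_iff]
    exact ⟨(exp_pos 2).le, by nlinarith [add_one_le_exp (2 : ℝ)]⟩
  calc √8 * exp (3 / 2 * lam ^ 2 - 8 * (10 + 3 * lam ^ 2) * log p / 8)
      ≤ exp 2 * exp (3 / 2 * lam ^ 2 - 8 * (10 + 3 * lam ^ 2) * log p / 8) := by gcongr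
    _ ≤ exp (-6 * log p) := by
        rw [← exp_add]
        gcongr
        linarith

lemma mul_exp_neg_six_mul_log (hp : 1 ≤ p) : p * exp (-6 * log p) = exp (-5 * log p) := by
  have : (0 : ℝ) < p := by exact_mod_cast hp
  nth_rw 1 [← exp_log this]
  rw [← exp_add]
  ring_nf

lemma mul_log_le_mul_sq_sub_linePeak (hX : MutuallyCoherent X τ) (hτ : 0 ≤ τ) (hp : 2 ≤ p)
    (hK : 0 ≤ K) (hw : GoodNoise X K w)
    (hβ : τ * (Finset.univ.filter fun j => β j ≠ 0).card ≤ 1 / 9) (hj : j ∉ R)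
    (hR : R.card * τ ≤ 2 / 9)
    (hsmall : ∀ k ∉ insert j R, |β k| ≤ detectionConstant K D lam * √(log p / n)) {t : ℝ}
    (ht : contractionConstant K D lam * √(log p / n) < |t - β j|) :
    8 * (10 + 3 * lam ^ 2) * log p ≤ (columnResidual X R j ⬝ᵥ columnResidual X R j) *
      (t - linePeak (X *ᵥ β + w) (columnResidual X R j)) ^ 2 := by
  have hn := hX.cast_pos j
  have hr := hX.half_le_columnResidual_dotProduct_self hτ hj hR
  have hr_nonneg := (half_pos hn).le.trans hr
  have hpeak := hX.abs_linePeak_sub_le hτ hj hR hβ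
    (mul_nonneg detectionConstant_nonneg (sqrt_nonneg _))
    (fun k hk hkj => hsmall k (by simp [hk, hkj]))
    fun l => (hw.abs_dotProduct_col_le hX hp hK l).trans_eq (mul_left_comm _ _ _)
  have hrate := hX.cast_mul_sq_sqrt j
  set r := columnResidual X R j
  set q := √(log p / n)
  have hfar : 4 * √(10 + 3 * lam ^ 2) * q ≤ |t - linePeak (X *ᵥ β + w) r| := by
    have := abs_sub_le t (linePeak (X *ᵥ β + w) r) (β j)
    rw [contractionConstant] at ht
    linarith
  calc 8 * (10 + 3 * lam ^ 2) * log p = n / 2 * (4 * √(10 + 3 * lam ^ 2) * q) ^ 2 := by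
        rw [mul_pow, mul_pow, sq_sqrt (by positivity), ← hrate]
        ring
    _ ≤ (r ⬝ᵥ r) * (t - linePeak (X *ᵥ β + w) r) ^ 2 := by
        rw [← sq_abs (t - _)]
        gcongr

lemma modelMass_coordinate_le (hX : MutuallyCoherent X τ) (hτ : 0 ≤ τ) (hp : 2 ≤ p) (hK : 0 ≤ K)
    (hlam : 0 ≤ lam) (hw : GoodNoise X K w)
    (hβ : τ * (Finset.univ.filter fun j => β j ≠ 0).card ≤ 1 / 9)
    (hScard : ((S.card : ℝ) - 1) * τ ≤ 2 / 9)
    (hsmall : ∀ j ∉ S, |β j| ≤ detectionConstant K D lam * √(log p / n)) (j : ↥S) :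
    modelMass X D lam (X *ᵥ β + w) S
        {Q | contractionConstant K D lam * √(log p / n) < |Q j - β j|} ≤
      ENNReal.ofReal (exp (-6 * log p)) * modelMass X D lam (X *ᵥ β + w) S Set.univ := by
  obtain ⟨j, hjS⟩ := j
  obtain ⟨R, hj, rfl⟩ : ∃ R, j ∉ R ∧ insert j R = S :=
    ⟨S.erase j, S.notMem_erase j, Finset.insert_erase hjS⟩
  have hR : R.card * τ ≤ 2 / 9 := by simpa [Finset.card_insert_of_notMem hj] using hScard
  have hr :=
    (half_pos (hX.cast_pos j)).trans_le (hX.half_le_columnResidual_dotProduct_self hτ hj hR)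
  have htail := modelMass_insert_le_of_linePeak (D := D) (Y := X *ᵥ β + w)
    (B := {t | contractionConstant K D lam * √(log p / n) < |t - β j|})
    hj (hX.gramDet_pos_of_card_mul_le hτ hR) hr hlam
    (measurableSet_lt measurable_const (by fun_prop))
    fun t ht => mul_log_le_mul_sq_sub_linePeak hX hτ hp hK hw hβ hj hR hsmall ht
  refine htail.trans ?_
  gcongr
  exact tail_factor_le hp lam

lemma modelMass_sup_le (hX : MutuallyCoherent X τ) (hτ : 0 ≤ τ) (hp : 2 ≤ p) (hK : 0 ≤ K)
    (hlam : 0 ≤ lam) (hw : GoodNoise X K w)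
    (hβ : τ * (Finset.univ.filter fun j => β j ≠ 0).card ≤ 1 / 9)
    (hScard : ((S.card : ℝ) - 1) * τ ≤ 2 / 9)
    (hsmall : ∀ j ∉ S, |β j| ≤ detectionConstant K D lam * √(log p / n)) :
    modelMass X D lam (X *ᵥ β + w) S
        {Q | contractionConstant K D lam * √(log p / n) < ⨆ j, |sparseVec S Q j - β j|} ≤
      ENNReal.ofReal (exp (-5 * log p)) * modelMass X D lam (X *ᵥ β + w) S Set.univ := by
  have : Nonempty (Fin p) := ⟨⟨0, by lia⟩⟩
  set ε := contractionConstant K D lam * √(log p / n) with hε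
  have hcover : {Q : ↥S → ℝ | ε < ⨆ j, |sparseVec S Q j - β j|} ⊆
      ⋃ j : ↥S, {Q | ε < |Q j - β j|} := fun Q hQ => by
    obtain ⟨j, hj⟩ := exists_lt_of_lt_ciSup (Set.mem_ofPred.1 hQ)
    by_cases hjS : j ∈ S
    · rw [sparseVec, dif_pos hjS] at hj
      exact Set.mem_iUnion.2 ⟨⟨j, hjS⟩, hj⟩
    · rw [sparseVec, dif_neg hjS, zero_sub, abs_neg] at hj
      refine absurd ((hsmall j hjS).trans ?_) hj.not_ge
      grw [hε, detectionConstant_le_contractionConstant]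
  calc modelMass X D lam (X *ᵥ β + w) S {Q | ε < ⨆ j, |sparseVec S Q j - β j|}
      ≤ modelMass X D lam (X *ᵥ β + w) S (⋃ j : ↥S, {Q | ε < |Q j - β j|}) := measure_mono hcover
    _ ≤ ∑ j : ↥S, modelMass X D lam (X *ᵥ β + w) S {Q | ε < |Q j - β j|} :=
        measure_iUnion_fintype_le _ _
    _ ≤ ∑ _j : ↥S, ENNReal.ofReal (exp (-6 * log p)) *
          modelMass X D lam (X *ᵥ β + w) S Set.univ :=
        Finset.sum_le_sum fun j _ => modelMass_coordinate_le hX hτ hp hK hlam hw hβ hScard hsmall j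
    _ = ENNReal.ofReal (S.card * exp (-6 * log p)) *
          modelMass X D lam (X *ᵥ β + w) S Set.univ := by
        rw [Finset.sum_const, Finset.card_univ, Fintype.card_coe, nsmul_eq_mul, ← mul_assoc,
          ENNReal.ofReal_mul S.card.cast_nonneg, ENNReal.ofReal_natCast]
    _ ≤ ENNReal.ofReal (p * exp (-6 * log p)) *
          modelMass X D lam (X *ᵥ β + w) S Set.univ := by
        gcongr
        exact card_finset_fin_le S
    _ = ENNReal.ofReal (exp (-5 * log p)) * modelMass X D lam (X *ᵥ β + w) S Set.univ := by
        rw [mul_exp_neg_six_mul_log (by lia)]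

end Contraction

section Summation

variable {n p : ℕ} {X : Matrix (Fin n) (Fin p) ℝ} {τ : ℝ} {S₀ S : Finset (Fin p)}
  {D K lam : ℝ} {w : Fin n → ℝ} {β : Fin p → ℝ}

lemma sum_sum_compl_insert_le {ι M : Type*} [Fintype ι] [DecidableEq ι] [AddCommMonoid M]
    [PartialOrder M] [IsOrderedAddMonoid M] [CanonicallyOrderedAdd M] (f : Finset ι → M) :
    ∑ S, ∑ j ∈ Sᶜ, f (insert j S) ≤ Fintype.card ι • ∑ S, f S := by
  have hinj (j : ι) : Set.InjOn (insert j) {S : Finset ι | j ∉ S} := fun S hS T hT h => by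
    rw [← Finset.erase_insert hS, h, Finset.erase_insert hT]
  have hcomm : ∑ S, ∑ j ∈ Sᶜ, f (insert j S) = ∑ j, ∑ S with j ∉ S, f (insert j S) :=
    Finset.sum_comm' (by simp)
  rw [hcomm, ← Finset.card_univ]
  refine Finset.sum_le_card_nsmul _ _ _ fun j _ => ?_
  rw [← Finset.sum_image (f := f) (by simpa using hinj j)]
  exact Finset.sum_le_sum_of_subset (Finset.subset_univ _)

lemma sum_sum_compl_exp_mul_insert_le (hp : 1 ≤ p) (f : Finset (Fin p) → ℝ≥0∞) :
    ∑ S, ∑ j ∈ Sᶜ, ENNReal.ofReal (exp (-6 * log p)) * f (insert j S) ≤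
      ENNReal.ofReal (exp (-5 * log p)) * ∑ S, f S := by
  simp only [← Finset.mul_sum]
  grw [sum_sum_compl_insert_le f]
  rw [Fintype.card_fin, nsmul_eq_mul, mul_left_comm, ← mul_assoc, ← ENNReal.ofReal_natCast p,
    ← ENNReal.ofReal_mul p.cast_nonneg, mul_exp_neg_six_mul_log hp]

lemma sum_admissible_inv_admissibleCount_le (X : Matrix (Fin n) (Fin p) ℝ) :
    ∑ S with Admissible X S, (admissibleCount X S.card : ℝ)⁻¹ ≤ p := by
  refine le_of_eq_of_le (Finset.sum_congr rfl fun S hS => ?_)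
    (sum_inv_card_same_size_le (𝒮 := {S | Admissible X S}) fun S hS => (Finset.mem_filter.1 hS).2.1)
  have hcard := (Finset.mem_filter.1 hS).2.1.card_pos
  rw [admissibleCount, Finset.filter_filter]
  congr! 4 with S' -
  constructor
  · exact fun h => ⟨⟨Finset.card_pos.1 (h.1 ▸ hcard), h.2⟩, h.1⟩
  · exact fun h => ⟨h.2, h.1.2⟩

lemma sum_large_admissible_modelMass_le (hS₀ : Admissible X S₀) (hp : 1 ≤ p) (hK : 0 < K)
    (hlam : 0 < lam) (hD : priorDecayThreshold K lam ≤ D) (hw : GoodNoise X K w)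
    (hβ : ∀ j ∉ S₀, β j = 0) :
    ∑ S with Admissible X S ∧ 2 * S₀.card ≤ S.card, modelMass X D lam (X *ᵥ β + w) S Set.univ ≤
      ENNReal.ofReal (exp (-5 * log p)) * modelMass X D lam (X *ᵥ β + w) S₀ Set.univ := by
  set m := modelMass X D lam (X *ᵥ β + w) S₀ Set.univ
  have hnonneg (S : Finset (Fin p)) :
      0 ≤ (admissibleCount X S.card : ℝ)⁻¹ * exp (-6 * log p) := by positivity
  calc ∑ S with Admissible X S ∧ 2 * S₀.card ≤ S.card, modelMass X D lam (X *ᵥ β + w) S Set.univ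
      ≤ ∑ S with Admissible X S ∧ 2 * S₀.card ≤ S.card,
          ENNReal.ofReal ((admissibleCount X S.card : ℝ)⁻¹ * exp (-6 * log p)) * m := by
        refine Finset.sum_le_sum fun S hS => ?_
        obtain ⟨-, hadm, hcard⟩ := Finset.mem_filter.1 hS
        exact modelMass_univ_le_of_two_mul_card_le hadm hS₀ hcard hK hlam hD hw hβ
    _ ≤ ∑ S with Admissible X S,
          ENNReal.ofReal ((admissibleCount X S.card : ℝ)⁻¹ * exp (-6 * log p)) * m :=
        Finset.sum_le_sum_of_subset (Finset.monotone_filter_right _ fun S _ => And.left)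
    _ = ENNReal.ofReal ((∑ S with Admissible X S, (admissibleCount X S.card : ℝ)⁻¹) *
          exp (-6 * log p)) * m := by
        rw [← Finset.sum_mul, Finset.sum_mul _ _ (exp _),
          ENNReal.ofReal_sum_of_nonneg fun S _ => hnonneg S]
    _ ≤ ENNReal.ofReal (exp (-5 * log p)) * m := by
        rw [← mul_exp_neg_six_mul_log hp]
        gcongr
        exact sum_admissible_inv_admissibleCount_le X

lemma MutuallyCoherent.exists_admissible_support (hX : MutuallyCoherent X τ) (hp : 1 ≤ p)
    (hτ : 0 ≤ τ) (hβ : τ * (Finset.univ.filter fun j => β j ≠ 0).card ≤ 1 / 9) :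
    ∃ S₀, Admissible X S₀ ∧ (∀ j ∉ S₀, β j = 0) ∧ ∀ S : Finset (Fin p), S.card < 2 * S₀.card →
      ((S.card : ℝ) - 1) * τ ≤ 2 / 9 ∧ ∀ j, β j ≠ 0 → S.card * τ ≤ 2 / 9 := by
  obtain hA | hA := (Finset.univ.filter fun j => β j ≠ 0).eq_empty_or_nonempty
  · have hzero (j) : β j = 0 := by simpa using Finset.filter_eq_empty_iff.1 hA (Finset.mem_univ j)
    refine ⟨{⟨0, hp⟩}, ⟨Finset.singleton_nonempty _, hX.gramDet_pos (by simp)⟩,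
      fun j _ => hzero j, fun S hS => ⟨?_, fun j hj => absurd (hzero j) hj⟩⟩
    have hcard : (S.card : ℝ) ≤ 1 := by
      rw [Finset.card_singleton] at hS
      exact mod_cast Nat.le_of_lt_succ hS
    exact (mul_nonpos_of_nonpos_of_nonneg (sub_nonpos.2 hcard) hτ).trans (by norm_num)
  · refine ⟨_, ⟨hA, hX.gramDet_pos (by linarith)⟩, fun j hj => by simpa using hj, fun S hS => ?_⟩
    have hcard : (S.card : ℝ) ≤ 2 * (Finset.univ.filter fun j => β j ≠ 0).card := mod_cast hS.le
    have hSτ : S.card * τ ≤ 2 / 9 := by linarith [mul_le_mul_of_nonneg_right hcard hτ]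
    exact ⟨by linarith, fun _ _ => hSτ⟩

lemma modelMass_sup_le_add (hX : MutuallyCoherent X τ) (hτ : 0 ≤ τ) (hp : 2 ≤ p) (hK : 0 ≤ K)
    (hlam : 0 < lam) (hD : 0 ≤ D) (hw : GoodNoise X K w)
    (hβ : τ * (Finset.univ.filter fun j => β j ≠ 0).card ≤ 1 / 9) (hS : S.Nonempty)
    (hScard : ((S.card : ℝ) - 1) * τ ≤ 2 / 9) (hScard' : ∀ j, β j ≠ 0 → S.card * τ ≤ 2 / 9) :
    modelMass X D lam (X *ᵥ β + w) S
        {Q | contractionConstant K D lam * √(log p / n) < ⨆ j, |sparseVec S Q j - β j|} ≤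
      ∑ j ∈ Sᶜ, ENNReal.ofReal (exp (-6 * log p)) *
        modelMass X D lam (X *ᵥ β + w) (insert j S) Set.univ +
      ENNReal.ofReal (exp (-5 * log p)) * modelMass X D lam (X *ᵥ β + w) S Set.univ := by
  by_cases! hlarge : ∃ j ∉ S, detectionConstant K D lam * √(log p / n) < |β j|
  · obtain ⟨l, hlS, hl⟩ := hlarge
    have hβl : β l ≠ 0 :=
      abs_pos.1 ((mul_nonneg detectionConstant_nonneg (sqrt_nonneg _)).trans_lt hl)
    obtain ⟨j, hj, hmass⟩ :=
      exists_modelMass_univ_le_insert hX hτ hp hK hlam hD hw hβ hS (hScard' l hβl) ⟨l, hlS, hl⟩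
    exact (measure_mono (Set.subset_univ _)).trans <| hmass.trans <| le_add_right <|
      Finset.single_le_sum_of_canonicallyOrdered
        (f := fun j => _ * modelMass X D lam (X *ᵥ β + w) (insert j S) Set.univ)
        (Finset.mem_compl.2 hj)
  · exact (modelMass_sup_le hX hτ hp hK hlam.le hw hβ hScard hlarge).trans le_add_self

lemma sum_modelMass_sup_le (hX : MutuallyCoherent X τ) (hτ : 0 ≤ τ) (hp : 2 ≤ p) (hK : 0 < K)
    (hlam : 0 < lam) (hD : priorDecayThreshold K lam ≤ D) (hw : GoodNoise X K w)
    (hβ : τ * (Finset.univ.filter fun j => β j ≠ 0).card ≤ 1 / 9) :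
    ∑ S, modelMass X D lam (X *ᵥ β + w) S
        {Q | contractionConstant K D lam * √(log p / n) < ⨆ j, |sparseVec S Q j - β j|} ≤
      ENNReal.ofReal (3 * exp (-5 * log p)) *
        ∑ S, modelMass X D lam (X *ᵥ β + w) S Set.univ := by
  obtain ⟨S₀, hS₀, hβS₀, hsmall⟩ := hX.exists_admissible_support (by lia) hτ hβ
  have hD_nonneg : 0 ≤ D := (priorDecayThreshold_pos hK hlam).le.trans hD
  set m := fun S => modelMass X D lam (X *ᵥ β + w) S Set.univ
  set U := fun S : Finset (Fin p) => {Q : ↥S → ℝ | contractionConstant K D lam * √(log p / n) <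
    ⨆ j, |sparseVec S Q j - β j|}
  set large := fun S => Admissible X S ∧ 2 * S₀.card ≤ S.card
  have hmodel (S : Finset (Fin p)) : modelMass X D lam (X *ᵥ β + w) S (U S) ≤
      (if large S then m S else 0) +
        (∑ j ∈ Sᶜ, ENNReal.ofReal (exp (-6 * log p)) * m (insert j S) +
          ENNReal.ofReal (exp (-5 * log p)) * m S) := by
    by_cases hS : Admissible X S
    · obtain hcard | hcard := le_or_gt (2 * S₀.card) S.card
      · rw [if_pos ⟨hS, hcard⟩]
        exact (measure_mono (Set.subset_univ _)).trans le_self_add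
      · obtain ⟨hScard, hScard'⟩ := hsmall S hcard
        exact (modelMass_sup_le_add hX hτ hp hK.le hlam hD_nonneg hw hβ hS.1 hScard hScard').trans
          le_add_self
    · simp [modelMass_eq_zero hS]
  have hlarge : ∑ S with large S, m S ≤ ENNReal.ofReal (exp (-5 * log p)) * ∑ S, m S := by
    grw [← Finset.single_le_sum_of_canonicallyOrdered (f := m) (Finset.mem_univ S₀)]
    exact sum_large_admissible_modelMass_le hS₀ (by lia) hK hlam hD hw hβS₀
  calc ∑ S, modelMass X D lam (X *ᵥ β + w) S (U S)
      ≤ ∑ S with large S, m S +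
          (∑ S, ∑ j ∈ Sᶜ, ENNReal.ofReal (exp (-6 * log p)) * m (insert j S) +
            ENNReal.ofReal (exp (-5 * log p)) * ∑ S, m S) := by
        rw [Finset.sum_filter, Finset.mul_sum, ← Finset.sum_add_distrib, ← Finset.sum_add_distrib]
        exact Finset.sum_le_sum fun S _ => hmodel S
    _ ≤ ENNReal.ofReal (exp (-5 * log p)) * ∑ S, m S +
          (ENNReal.ofReal (exp (-5 * log p)) * ∑ S, m S +
            ENNReal.ofReal (exp (-5 * log p)) * ∑ S, m S) := by
        grw [hlarge, sum_sum_compl_exp_mul_insert_le (by lia) m]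
    _ = ENNReal.ofReal (3 * exp (-5 * log p)) * ∑ S, m S := by
        rw [ENNReal.ofReal_mul zero_le_three, ENNReal.ofReal_ofNat]
        ring

end Summation

section Posterior

variable {n p : ℕ} {X : Matrix (Fin n) (Fin p) ℝ} {D lam : ℝ} {Y : Fin n → ℝ}
  {U : Set (Fin p → ℝ)}

lemma modelMass_real_apply (X : Matrix (Fin n) (Fin p) ℝ) (D : ℝ) (hlam : 0 ≤ lam)
    (Y : Fin n → ℝ) (S : Finset (Fin p)) (B : Set (↥S → ℝ)) :
    (modelMass X D lam Y S).real B =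
      modelWeight X D lam S * ∫ Q in B, posteriorDensity Y lam (colSub X S *ᵥ Q) := by
  have hcont : Continuous fun Q : ↥S → ℝ => posteriorDensity Y lam (colSub X S *ᵥ Q) := by fun_prop
  rw [measureReal_def, modelMass_apply, ENNReal.toReal_mul,
    ENNReal.toReal_ofReal (modelWeight_nonneg X D hlam S), integral_eq_lintegral_of_nonneg_ae
      (Filter.Eventually.of_forall fun _ => posteriorDensity_pos.le) hcont.aestronglyMeasurable]

lemma modelWeight_eq (X : Matrix (Fin n) (Fin p) ℝ) (D lam : ℝ) (S : Finset (Fin p)) :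
    modelWeight X D lam S = (if S.Nonempty ∧ 0 < gramDet (colSub X S) then 1 else 0) *
      exp (-2 * D * S.card * log (exp 1 * p / S.card)) *
      ((Finset.univ.filter fun S' : Finset (Fin p) =>
        S'.card = S.card ∧ 0 < gramDet (colSub X S')).card : ℝ)⁻¹ *
      √(gramDet (colSub X S)) * (lam / √π) ^ S.card := by
  have hexponent : -(2 * D * modelComplexity p S.card) =
      -2 * D * S.card * log (exp 1 * p / S.card) := by
    rw [modelComplexity]
    ring
  simp only [modelWeight, Admissible, admissibleCount, hexponent, ite_mul, one_mul, zero_mul]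

lemma slrPost_eq_div (hlam : 0 ≤ lam) :
    slrPost n p X D lam Y Set.univ U =
      (∑ S, (modelMass X D lam Y S).real {Q | sparseVec S Q ∈ U}) /
        ∑ S, (modelMass X D lam Y S).real Set.univ := by
  simp only [slrPost, gpostP, modelMass_real_apply X D hlam, modelWeight_eq, Set.mem_univ, if_true,
    Fintype.card_coe, Measure.restrict_univ]
  rfl

lemma slrPost_le_of_sum_le (hlam : 0 ≤ lam) {c : ℝ} (hc : 0 ≤ c)
    (h : ∑ S, modelMass X D lam Y S {Q | sparseVec S Q ∈ U} ≤
      ENNReal.ofReal c * ∑ S, modelMass X D lam Y S Set.univ) :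
    slrPost n p X D lam Y Set.univ U ≤ c := by
  have hfinite (S : Finset (Fin p)) (B : Set (↥S → ℝ)) : modelMass X D lam Y S B ≠ ⊤ :=
    measure_ne_top_of_subset (Set.subset_univ B) (modelMass_univ_lt_top D hlam Y S).ne
  have hreal := ENNReal.toReal_mono (ENNReal.mul_ne_top ENNReal.ofReal_ne_top
    (ENNReal.sum_ne_top.2 fun S _ => hfinite S Set.univ)) h
  rw [ENNReal.toReal_mul, ENNReal.toReal_ofReal hc, ENNReal.toReal_sum fun S _ => hfinite S _,
    ENNReal.toReal_sum fun S _ => hfinite S _] at hreal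
  rw [slrPost_eq_div hlam]
  exact div_le_of_le_mul₀ (Finset.sum_nonneg fun S _ => measureReal_nonneg) hc hreal

lemma slrPost_le_one (hlam : 0 ≤ lam) : slrPost n p X D lam Y Set.univ U ≤ 1 := by
  refine slrPost_le_of_sum_le hlam zero_le_one ?_
  rw [ENNReal.ofReal_one, one_mul]
  gcongr
  exact Set.subset_univ _

lemma slrPost_nonpos_of_forall_not_admissible (hlam : 0 ≤ lam) (hX : ∀ S, ¬ Admissible X S) :
    slrPost n p X D lam Y Set.univ U ≤ 0 :=
  slrPost_le_of_sum_le hlam le_rfl (by simp [modelMass_eq_zero (hX _)])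

end Posterior

section Expectation

variable {Ω : Type*} [MeasurableSpace Ω] {P : Measure Ω} [IsProbabilityMeasure P] {f : Ω → ℝ}

lemma integral_le_of_le_one (hf : ∀ ω, f ω ≤ 1) : ∫ ω, f ω ∂P ≤ 1 := by
  by_cases hint : Integrable f P
  · simpa using integral_mono hint (integrable_const 1) hf
  · simp [integral_undef hint]

lemma integral_le_add_of_le_one {s : Set Ω} {δ ε : ℝ} (hδ : 0 ≤ δ) (hε : 0 ≤ ε)
    (hf : ∀ ω, f ω ≤ 1) (hfs : ∀ ω ∉ s, f ω ≤ δ) (hs : P s ≤ ENNReal.ofReal ε) :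
    ∫ ω, f ω ∂P ≤ δ + ε := by
  by_cases hint : Integrable f P
  swap
  · rw [integral_undef hint]
    positivity
  have hT := measurableSet_toMeasurable P s
  set T := toMeasurable P s
  have hTint : Integrable (T.indicator fun _ => (1 : ℝ)) P := (integrable_const 1).indicator hT
  have hbound (ω : Ω) : f ω ≤ δ + T.indicator (fun _ => 1) ω := by
    by_cases hω : ω ∈ s
    · rw [Set.indicator_of_mem (subset_toMeasurable P s hω)]
      exact (hf ω).trans (le_add_of_nonneg_left hδ)
    · exact (hfs ω hω).trans
        (le_add_of_nonneg_right (Set.indicator_nonneg (fun _ _ => zero_le_one) ω))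
  calc ∫ ω, f ω ∂P ≤ ∫ ω, (δ + T.indicator (fun _ => 1) ω) ∂P :=
        integral_mono hint ((integrable_const δ).add hTint) hbound
    _ = δ + (P s).toReal := by
        rw [integral_add (integrable_const δ) hTint, integral_indicator_const _ hT,
          measureReal_def, measure_toMeasurable]
        simp
    _ ≤ δ + ε := by
        gcongr
        exact ENNReal.toReal_le_of_le_ofReal hε hs

end Expectation

section SupContraction

variable {n p : ℕ} {X : Matrix (Fin n) (Fin p) ℝ} {D lam ρ τ : ℝ} {β : Fin p → ℝ}
  {Ω : Type*} [MeasurableSpace Ω] {P : Measure Ω} {W : Ω → Fin n → ℝ}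

lemma three_mul_exp_add_exp_le_rpow_neg_one (hp : 2 ≤ p) :
    3 * exp (-5 * log p) + exp (-5 * log p) ≤ (p : ℝ) ^ (-1 : ℝ) := by
  have hp_pos : (0 : ℝ) < p := by positivity
  have hlog := half_le_log_of_two_le hp
  calc 3 * exp (-5 * log p) + exp (-5 * log p) = 2 * 2 * exp (-5 * log p) := by ring
    _ ≤ p * p * exp (-5 * log p) := by gcongr <;> exact mod_cast hp
    _ = exp (log p + log p + -5 * log p) := by simp only [exp_add, exp_log hp_pos]
    _ ≤ (p : ℝ) ^ (-1 : ℝ) := by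
        rw [rpow_def_of_pos hp_pos]
        gcongr
        linarith

lemma MutuallyCoherent.integral_slrPost_le [IsProbabilityMeasure P] (hX : MutuallyCoherent X τ)
    (hτ : 0 ≤ τ) (hlam : 0 < lam) (hρ : 0 < ρ) (hD : priorDecayThreshold (72 / ρ) lam ≤ D)
    (hβ : τ * (Finset.univ.filter fun j => β j ≠ 0).card ≤ 1 / 9) (hW : subG P ρ W) :
    ∫ ω, slrPost n p X D lam (X *ᵥ β + W ω) Set.univ
        {b | contractionConstant (72 / ρ) D lam * √(log p / n) < ⨆ j, |b j - β j|} ∂P ≤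
      (p : ℝ) ^ (-1 : ℝ) := by
  obtain rfl | rfl | hp : p = 0 ∨ p = 1 ∨ 2 ≤ p := by lia
  · refine (integral_nonpos fun ω => ?_).trans (by positivity)
    exact slrPost_nonpos_of_forall_not_admissible hlam.le fun S hS => hS.1.choose.elim0
  · simpa using integral_le_of_le_one fun ω => slrPost_le_one hlam.le
  · refine le_trans ?_ (three_mul_exp_add_exp_le_rpow_neg_one hp)
    refine integral_le_add_of_le_one (by positivity) (by positivity)
      (fun ω => slrPost_le_one hlam.le) (fun ω hω => ?_)
      (hW.measure_not_goodNoise_le hρ X (by lia))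
    exact slrPost_le_of_sum_le hlam.le (by positivity) <|
      sum_modelMass_sup_le hX hτ hp (by positivity) hlam hD (not_not.1 hω) hβ

end SupContraction

/-- Theorem 2 (ℓ∞ posterior contraction for sparse regression): under the mutual
coherence condition `τ̄ s* ≤ 1/9`, the sparse regression posterior contracts at the rate
`√(log p / n)` in the `ℓ_∞` norm. -/
theorem slr_sup_contraction :
    ∀ lam ρ : ℝ, 0 < lam → 0 < ρ →
    ∃ D₀ : ℝ, 0 < D₀ ∧ ∀ D : ℝ, D₀ < D →
    ∃ M C' : ℝ, 0 < M ∧ 0 < C' ∧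
    ∀ τb : ℝ, 0 < τb →
    ∀ (n p : ℕ) (X : Matrix (Fin n) (Fin p) ℝ),
      (∀ j : Fin p, (n : ℝ)⁻¹ * ∑ i, X i j * X i j = 1) →
      (∀ j l : Fin p, j ≠ l → |(n : ℝ)⁻¹ * ∑ i, X i j * X i l| ≤ τb) →
    ∀ (βs : Fin p → ℝ) (ss : ℕ),
      ss = (Finset.univ.filter fun j => βs j ≠ 0).card →
      τb * (ss : ℝ) ≤ 1 / 9 →
    ∀ (Ω : Type) (_ : MeasurableSpace Ω) (P : Measure Ω) (_ : IsProbabilityMeasure P)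
      (W : Ω → Fin n → ℝ), subG P ρ W →
    ∫ ω, slrPost n p X D lam (fun i => X.mulVec βs i + W ω i) Set.univ
        {β : Fin p → ℝ |
          M * Real.sqrt (Real.log p / n) < ⨆ j, |β j - βs j|} ∂P
      ≤ (p : ℝ) ^ (-C') := by
  intro lam ρ hlam hρ
  refine ⟨priorDecayThreshold (72 / ρ) lam, priorDecayThreshold_pos (by positivity) hlam,
    fun D hD => ⟨contractionConstant (72 / ρ) D lam, 1, contractionConstant_pos, one_pos, ?_⟩⟩
  rintro τ hτ n p X hnormalized hcoherent β _ rfl hβ Ω _ P _ W hW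
  have hX : MutuallyCoherent X τ := ⟨hnormalized, hcoherent⟩
  exact hX.integral_slrPost_le hτ.le hlam hρ hD.le hβ hW
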